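/- For every c ∈ ℝ, the CC-norm of the central element (0,0,c) of H₃(ℝ) equals ‖(0,0,c)‖_CC = 2·√(|c| · vol(L*)), where L* is the polar dual of L and vol is Lebesgue measure on ℝ². -/

import Mathlib

open MeasureTheory

/-- An absolutely continuous curve `[0,1] → ℝ²`, encoded by a function together with an
(interval-integrable) derivative whose integral recovers the function on `[0,1]`. -/
structure ACCurve where
  toFun : ℝ → ℝ × ℝ
  deriv : ℝ → ℝ × ℝ
  integrable : IntervalIntegrable deriv volume 0 1
  integral_eq : ∀ t ∈ Set.Icc (0:ℝ) 1,
    toFun t = toFun 0 + ∫ s in (0:ℝ)..t, deriv s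

/-- The balayage (signed) area `A(γ) = (1/2)∫₀¹ (γ₁ γ₂' − γ₂ γ₁')`. -/
noncomputable def ACCurve.area (γ : ACCurve) : ℝ :=
  (1/2) * ∫ t in (0:ℝ)..1,
    ((γ.toFun t).1 * (γ.deriv t).2 - (γ.toFun t).2 * (γ.deriv t).1)

/-- The `L`-length `‖γ‖_L = ∫₀¹ ‖γ'(t)‖_L dt`, where `‖·‖_L` is the gauge of `L`. -/
noncomputable def ACCurve.length (L : Set (ℝ × ℝ)) (γ : ACCurve) : ℝ :=
  ∫ t in (0:ℝ)..1, gauge L (γ.deriv t)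

/-- The Carnot–Carathéodory norm of `(x, y, z) ∈ H₃(ℝ)`: the infimum of `L`-lengths of
absolutely continuous curves from `0` to `(x, y)` with balayage area `z`. -/
noncomputable def ccNorm (L : Set (ℝ × ℝ)) (g : ℝ × ℝ × ℝ) : ℝ :=
  sInf { r | ∃ γ : ACCurve, γ.toFun 0 = 0 ∧ γ.toFun 1 = (g.1, g.2.1) ∧
    γ.area = g.2.2 ∧ γ.length L = r }

/-- The group law of `H₃(ℝ)` on `ℝ³`:
`(x,y,z)·(x',y',z') = (x+x', y+y', z+z'+(xy'−yx')/2)`. -/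
noncomputable def heisMul (g h : ℝ × ℝ × ℝ) : ℝ × ℝ × ℝ :=
  (g.1 + h.1, g.2.1 + h.2.1, g.2.2 + h.2.2 + (g.1 * h.2.1 - g.2.1 * h.1) / 2)

/-- The polar dual `L* = {x | ∀ y ∈ L, ⟨x,y⟩ ≤ 1}`. -/
def polarDual (L : Set (ℝ × ℝ)) : Set (ℝ × ℝ) :=
  { x | ∀ y ∈ L, x.1 * y.1 + x.2 * y.2 ≤ 1 }

/-!
The formula is the isoperimetric inequality in the normed plane with unit ball `L`, the optimal
shape being the polar dual `L*` rotated by a right angle.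

Since `L` is a centrally symmetric polygon, its gauge is a finite sum `h v = ∑ⱼ |gⱼ × v|`
(`gauge_eq_zonoNorm`): on the line `x = 1` the gauge is convex and piecewise linear, so it is a
combination of functions `|y - mⱼ|` and a constant. Hence `L*` is the rotated zonogon
`∑ⱼ [-J gⱼ, J gⱼ]` (`polarDual_eq_zonogon`), and adding the segments one by one shows that its area
is `V = 4 ∑_{i<j} |gᵢ × gⱼ|` (`volume_zonogon`).

Lower bound. The kernel `|a - b|` on the line is conditionally negative definite; homogenized, this
says that the form `∑ᵢⱼ |vᵢ × vⱼ|` on finite families of vectors satisfies a reverse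
Cauchy–Schwarz inequality (`cross_reverse_cs`). Applied to the edges `eᵢ` of a path and to the
generators `gⱼ` it gives `V ∑_{i<j} |eᵢ × eⱼ| ≤ (∑ᵢ h eᵢ)²`, and so
`V |A| ≤ ℓ² / 2` for the area `A` which a polygonal path of length `ℓ` encloses with its chord
(`polygon_half_bound` is this for twice the area). A closed polygon cut at half its length `ℓ`
consists of two paths of length `ℓ / 2`, whence `4 V |A| ≤ ℓ²`. Inscribed polygons extend this to
absolutely continuous curves (`ACCurve.isoperimetric`).

Upper bound. Traversing the polygon with edges `r g₀, …, r g_{k-1}, -r g₀, …, -r g_{k-1}`, where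
the `gⱼ` are sorted by angle, gives area `r² V / 4` and length `r V` (`exists_optimal_curve`). The
choice `r = 2 √(|c| / V)` yields area `|c|` and length `2 √(|c| V)`; reversing the order of the
generators changes the sign of the area.
-/

/-! ### Reverse Cauchy–Schwarz inequality for the absolute determinant -/

/-- The determinant `u₁v₂ − u₂v₁` of two plane vectors. -/
def cross (u v : ℝ × ℝ) : ℝ := u.1 * v.2 - u.2 * v.1

/-- The kernel `|a − b|` on the real line is conditionally negative definite:
`|a − b|` is the integral over `s` of `(1_{s≤a} − 1_{s≤b})²`. -/
lemma sum_abs_sub_nonpos {ι : Type*} [Fintype ι] (c m : ι → ℝ) (hc : ∑ i, c i = 0) :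
    ∑ i, ∑ j, c i * c j * |m i - m j| ≤ 0 := by
  classical
  let φ : ℝ → ℝ → ℝ := fun a s => (Set.Iic a).indicator (fun _ => (1 : ℝ)) s
  obtain ⟨R, hR⟩ : ∃ R, ∀ i, |m i| ≤ R :=
    ⟨∑ i, |m i|, fun i => Finset.single_le_sum (f := fun i => |m i|) (fun _ _ => abs_nonneg _)
      (Finset.mem_univ i)⟩
  have hφ : ∀ a, IntervalIntegrable (φ a) volume (-R) R := fun a => by
    rw [intervalIntegrable_iff]
    exact (integrableOn_const (by simp)).indicator measurableSet_Iic
  have hφm : ∀ a b s, φ a s * φ b s = φ (min a b) s := fun a b s => by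
    by_cases h : s ≤ a <;> by_cases h' : s ≤ b <;> simp [φ, h, h']
  have hint : ∀ a, |a| ≤ R → ∫ s in (-R)..R, φ a s = a + R := fun a ha => by
    have h1 := abs_le.1 ha
    rw [intervalIntegral.integral_of_le (by linarith)]
    simp only [φ]
    rw [setIntegral_indicator measurableSet_Iic]
    rw [Set.Ioc_inter_Iic, min_eq_right h1.2]
    simp
    linarith
  have hmin : ∀ i j, |min (m i) (m j)| ≤ R := fun i j => by
    rcases min_choice (m i) (m j) with h | h <;> rw [h] <;> exact hR _
  have key : ∑ i, ∑ j, c i * c j * min (m i) (m j)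
      = ∫ s in (-R)..R, (∑ i, c i * φ (m i) s) ^ 2 := by
    have h1 : ∀ s, (∑ i, c i * φ (m i) s) ^ 2
        = ∑ i, ∑ j, c i * c j * φ (min (m i) (m j)) s := fun s => by
      rw [sq, Finset.sum_mul_sum]
      refine Finset.sum_congr rfl fun i _ => Finset.sum_congr rfl fun j _ => ?_
      rw [← hφm]; ring
    simp_rw [h1]
    rw [intervalIntegral.integral_finsetSum]
    · have h2 : ∀ i, ∫ s in (-R)..R, ∑ j, c i * c j * φ (min (m i) (m j)) s
          = ∑ j, c i * c j * (min (m i) (m j) + R) := fun i => by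
        rw [intervalIntegral.integral_finsetSum]
        · refine Finset.sum_congr rfl fun j _ => ?_
          rw [intervalIntegral.integral_const_mul, hint _ (hmin i j)]
        · intro j _; exact (hφ _).const_mul _
      simp_rw [h2, mul_add, Finset.sum_add_distrib]
      have : ∑ i, ∑ j, c i * c j * R = 0 := by
        simp_rw [← Finset.sum_mul, ← Finset.mul_sum, hc]; simp
      rw [this, add_zero]
    · intro i _
      have := IntervalIntegrable.sum Finset.univ fun j (_ : j ∈ Finset.univ) =>
        (hφ (min (m i) (m j))).const_mul (c i * c j)
      rwa [Finset.sum_fn] at this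
  have h0 : 0 ≤ ∑ i, ∑ j, c i * c j * min (m i) (m j) := by
    rw [key]
    rcases isEmpty_or_nonempty ι with h | ⟨⟨i⟩⟩
    · simp
    · have := (abs_nonneg _).trans (hR i)
      exact intervalIntegral.integral_nonneg (by linarith) fun _ _ => sq_nonneg _
  have h3 : ∑ i, ∑ j, c i * c j * |m i - m j|
      = - 2 * ∑ i, ∑ j, c i * c j * min (m i) (m j) := by
    have e : ∀ i j, c i * c j * |m i - m j| =
        c i * m i * c j + c i * (c j * m j) + (-2) * (c i * c j * min (m i) (m j)) := fun i j => by
      have : |m i - m j| = m i + m j - 2 * min (m i) (m j) := by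
        rcases le_total (m i) (m j) with h | h
        · rw [min_eq_left h, abs_of_nonpos (by linarith)]; ring
        · rw [min_eq_right h, abs_of_nonneg (by linarith)]; ring
      rw [this]; ring
    simp_rw [e, Finset.sum_add_distrib, ← Finset.mul_sum, ← Finset.sum_mul, hc]
    simp
  rw [h3]; linarith

/-- Reverse Cauchy–Schwarz inequality for the form `∑ᵢⱼ |vᵢ × vⱼ|`, when no vector is vertical. Then
`|u × v| = |u₁| |v₁| |m_u − m_v|` with slopes `m`, and negative definiteness on families of
total mass zero gives the claim. -/
lemma cross_reverse_cs_aux {ι κ : Type*} [Fintype ι] [Fintype κ] [Nonempty ι] [Nonempty κ]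
    (e : ι → ℝ × ℝ) (g : κ → ℝ × ℝ)
    (he : ∀ i, (e i).1 ≠ 0) (hg : ∀ j, (g j).1 ≠ 0) :
    (∑ i, ∑ j, |cross (e i) (e j)|) * (∑ i, ∑ j, |cross (g i) (g j)|)
      ≤ (∑ i, ∑ j, |cross (e i) (g j)|) ^ 2 := by
  set a := ∑ j, |(g j).1| with ha
  set b := ∑ i, |(e i).1| with hb
  have hapos : 0 < a := Finset.sum_pos (fun j _ => abs_pos.2 (hg j)) Finset.univ_nonempty
  have hbpos : 0 < b := Finset.sum_pos (fun j _ => abs_pos.2 (he j)) Finset.univ_nonempty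
  have hcr : ∀ u v : ℝ × ℝ, u.1 ≠ 0 → v.1 ≠ 0 →
      |cross u v| = |u.1| * |v.1| * |u.2 / u.1 - v.2 / v.1| := fun u v hu hv => by
    rw [← abs_mul, ← abs_mul, cross, abs_sub_comm]
    congr 1; field_simp
  have := sum_abs_sub_nonpos (ι := ι ⊕ κ)
    (Sum.elim (fun i => a * |(e i).1|) (fun j => -(b * |(g j).1|)))
    (Sum.elim (fun i => (e i).2 / (e i).1) (fun j => (g j).2 / (g j).1))
    (by simp [← Finset.mul_sum, ← ha, ← hb]; ring)
  simp only [Fintype.sum_sum_type, Sum.elim_inl, Sum.elim_inr] at this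
  set E := ∑ i, ∑ j, |cross (e i) (e j)| with hE
  set G := ∑ i, ∑ j, |cross (g i) (g j)| with hG
  set M := ∑ i, ∑ j, |cross (e i) (g j)| with hM
  have hM' : M = ∑ j, ∑ i, |cross (g j) (e i)| := by
    rw [hM, Finset.sum_comm]
    refine Finset.sum_congr rfl fun i _ => Finset.sum_congr rfl fun j _ => ?_
    rw [← abs_neg]; simp only [cross]; congr 1; ring
  have h2 : a ^ 2 * E + b ^ 2 * G - 2 * (a * b) * M ≤ 0 := by
    refine le_of_eq_of_le ?_ this
    have e3 : 2 * (a * b) * M = (a * b) * M + (a * b) * ∑ j, ∑ i, |cross (g j) (e i)| := by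
      rw [← hM']; ring
    rw [e3, hE, hG, hM]
    simp_rw [hcr _ _ (he _) (he _), hcr _ _ (hg _) (hg _), hcr _ _ (he _) (hg _),
      hcr _ _ (hg _) (he _), Finset.sum_add_distrib, Finset.mul_sum]
    have r : ∀ A B C D A' B' C' D' : ℝ, A = A' → B = B' → C = -C' → D = -D' →
      A + B - (C + D) = A' + C' + (D' + B') := by intros; linarith
    apply r
    all_goals
      try simp_rw [← Finset.sum_neg_distrib]
      refine Finset.sum_congr rfl fun i _ => Finset.sum_congr rfl fun j _ => ?_
      ring
  have hM0 : 0 ≤ M := Finset.sum_nonneg fun i _ => Finset.sum_nonneg fun j _ => abs_nonneg _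
  have hE0 : 0 ≤ E := Finset.sum_nonneg fun i _ => Finset.sum_nonneg fun j _ => abs_nonneg _
  have hG0 : 0 ≤ G := Finset.sum_nonneg fun i _ => Finset.sum_nonneg fun j _ => abs_nonneg _
  have hab : 0 < (a * b) ^ 2 := by positivity
  have h5 : (a ^ 2 * E + b ^ 2 * G) ^ 2 ≤ (2 * (a * b) * M) ^ 2 :=
    pow_le_pow_left₀ (by positivity) (by linarith) 2
  have h6 : (a * b) ^ 2 * (E * G) ≤ (a * b) ^ 2 * M ^ 2 := by
    nlinarith [sq_nonneg (a ^ 2 * E - b ^ 2 * G)]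
  exact le_of_mul_le_mul_left h6 hab

/-- Reverse Cauchy–Schwarz inequality for the form `∑ᵢⱼ |vᵢ × vⱼ|` on finite families of plane
vectors; this is Minkowski's inequality for the mixed area of two zonogons. -/
lemma cross_reverse_cs {ι κ : Type*} [Fintype ι] [Fintype κ]
    (e : ι → ℝ × ℝ) (g : κ → ℝ × ℝ) :
    (∑ i, ∑ j, |cross (e i) (e j)|) * (∑ i, ∑ j, |cross (g i) (g j)|)
      ≤ (∑ i, ∑ j, |cross (e i) (g j)|) ^ 2 := by
  rcases isEmpty_or_nonempty ι with h | h
  · simp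
  rcases isEmpty_or_nonempty κ with h | h
  · simp
  -- A horizontal translation by a small `ε > 0` makes every first coordinate nonzero.
  have hev : ∀ x : ℝ, ∀ᶠ ε in nhdsWithin (0 : ℝ) (Set.Ioi 0), x + ε ≠ 0 := fun x => by
    by_cases hx : x = 0
    · filter_upwards [self_mem_nhdsWithin] with ε hε
      simpa [hx] using (ne_of_gt hε)
    · refine nhdsWithin_le_nhds ?_
      have : ContinuousAt (fun ε : ℝ => x + ε) 0 := by fun_prop
      exact this.eventually_ne (by simpa using hx)
  have hall : ∀ᶠ ε in nhdsWithin (0 : ℝ) (Set.Ioi 0),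
      (∀ i, (e i).1 + ε ≠ 0) ∧ ∀ j, (g j).1 + ε ≠ 0 :=
    (Filter.eventually_all.2 fun i => hev _).and (Filter.eventually_all.2 fun i => hev _)
  let e' : ℝ → ι → ℝ × ℝ := fun ε i => ((e i).1 + ε, (e i).2)
  let g' : ℝ → κ → ℝ × ℝ := fun ε i => ((g i).1 + ε, (g i).2)
  have hc1 : Continuous fun ε => (∑ i, ∑ j, |cross (e' ε i) (e' ε j)|) *
      (∑ i, ∑ j, |cross (g' ε i) (g' ε j)|) := by
    simp only [e', g', cross]; fun_prop
  have hc2 : Continuous fun ε => (∑ i, ∑ j, |cross (e' ε i) (g' ε j)|) ^ 2 := by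
    simp only [e', g', cross]; fun_prop
  have t1 := (hc1.tendsto 0).mono_left (nhdsWithin_le_nhds (s := Set.Ioi (0 : ℝ)))
  have t2 := (hc2.tendsto 0).mono_left (nhdsWithin_le_nhds (s := Set.Ioi (0 : ℝ)))
  have := le_of_tendsto_of_tendsto t1 t2 (by
    filter_upwards [hall] with ε hε
    exact cross_reverse_cs_aux _ _ hε.1 hε.2)
  simpa [e', g'] using this

lemma sum_range_sum_symm (n : ℕ) (f : ℕ → ℕ → ℝ) (hs : ∀ i j, f i j = f j i)
    (hd : ∀ i, f i i = 0) :
    ∑ i ∈ Finset.range n, ∑ j ∈ Finset.range n, f i j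
      = 2 * ∑ j ∈ Finset.range n, ∑ i ∈ Finset.range j, f i j := by
  induction n with
  | zero => simp
  | succ n ih =>
    simp_rw [Finset.sum_range_succ _ n, Finset.sum_add_distrib, ih, hd]
    simp_rw [hs n]
    ring

/-- The support function `v ↦ ∑ⱼ |gⱼ × v|` of the zonogon with generators `g₀, …, g_{m-1}`
rotated by a right angle. -/
def zonoNorm (m : ℕ) (g : ℕ → ℝ × ℝ) (v : ℝ × ℝ) : ℝ :=
  ∑ j ∈ Finset.range m, |cross (g j) v|

/-- The sum `4 ∑_{i<j} |gᵢ × gⱼ|`, which is the area of the zonogon `∑ⱼ [-gⱼ, gⱼ]`. -/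
def zonoArea (m : ℕ) (g : ℕ → ℝ × ℝ) : ℝ :=
  4 * ∑ j ∈ Finset.range m, ∑ i ∈ Finset.range j, |cross (g i) (g j)|

lemma abs_cross_comm (u v : ℝ × ℝ) : |cross u v| = |cross v u| := by
  rw [← abs_neg]; simp only [cross]; congr 1; ring

lemma cross_self_eq (u : ℝ × ℝ) : cross u u = 0 := by simp [cross]; ring

/-- The isoperimetric inequality for a polygonal path with edges `e₀, …, e_{n-1}`. -/
lemma zono_isoperimetric (m : ℕ) (g : ℕ → ℝ × ℝ) (n : ℕ) (e : ℕ → ℝ × ℝ) :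
    zonoArea m g * ∑ j ∈ Finset.range n, ∑ i ∈ Finset.range j, |cross (e i) (e j)|
      ≤ (∑ k ∈ Finset.range n, zonoNorm m g (e k)) ^ 2 := by
  have := cross_reverse_cs (fun i : Fin n => e i) (fun j : Fin m => g j)
  have hsum : ∀ (a b : ℕ) (f : ℕ → ℕ → ℝ), ∑ i : Fin a, ∑ j : Fin b, f i j
      = ∑ i ∈ Finset.range a, ∑ j ∈ Finset.range b, f i j := fun a b f => by
    rw [← Fin.sum_univ_eq_sum_range (fun i => ∑ j ∈ Finset.range b, f i j) a]
    refine Finset.sum_congr rfl fun i _ => ?_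
    rw [← Fin.sum_univ_eq_sum_range (fun j => f i j) b]
  rw [hsum n n (fun i j => |cross (e i) (e j)|), hsum m m (fun i j => |cross (g i) (g j)|),
    hsum n m (fun i j => |cross (e i) (g j)|),
    sum_range_sum_symm n _ (fun _ _ => abs_cross_comm _ _) (fun _ => by rw [cross_self_eq]; simp),
    sum_range_sum_symm m _ (fun _ _ => abs_cross_comm _ _) (fun _ => by rw [cross_self_eq]; simp)]
    at this
  have h : ∑ i ∈ Finset.range n, ∑ j ∈ Finset.range m, |cross (e i) (g j)|
      = ∑ k ∈ Finset.range n, zonoNorm m g (e k) := by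
    refine Finset.sum_congr rfl fun i _ => Finset.sum_congr rfl fun j _ => ?_
    rw [abs_cross_comm]
  rw [h] at this
  unfold zonoArea
  linarith

/-! ### The gauge of a symmetric polygon as a sum of absolute determinants -/

lemma cross_smul_right (u : ℝ × ℝ) (r : ℝ) (v : ℝ × ℝ) : cross u (r • v) = r * cross u v := by
  simp [cross]; ring

lemma cross_add_right (u v w : ℝ × ℝ) : cross u (v + w) = cross u v + cross u w := by
  simp [cross]; ring

lemma zonoNorm_smul (m : ℕ) (g : ℕ → ℝ × ℝ) (r : ℝ) (v : ℝ × ℝ) :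
    zonoNorm m g (r • v) = |r| * zonoNorm m g v := by
  simp only [zonoNorm, cross_smul_right, abs_mul, Finset.mul_sum]

lemma zonoNorm_add_le (m : ℕ) (g : ℕ → ℝ × ℝ) (u v : ℝ × ℝ) :
    zonoNorm m g (u + v) ≤ zonoNorm m g u + zonoNorm m g v := by
  simp only [zonoNorm, cross_add_right, ← Finset.sum_add_distrib]
  exact Finset.sum_le_sum fun _ _ => abs_add_le _ _

lemma zonoNorm_nonneg (m : ℕ) (g : ℕ → ℝ × ℝ) (v : ℝ × ℝ) : 0 ≤ zonoNorm m g v :=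
  Finset.sum_nonneg fun _ _ => abs_nonneg _

/-- A seminorm `h` of the plane is dominated by a zonogon seminorm which agrees with `h` on the
vertical direction and on finitely many prescribed directions `(1, m₀), …, (1, mₙ)`. On the line
`x = 1` it is the piecewise linear interpolation of `h` at the nodes, continued with the slopes
`± h (0, 1)`; half the jump of the slope at a node is the weight of the corresponding generator. -/
lemma exists_zonoNorm_interpolation (h : ℝ × ℝ → ℝ) (hadd : ∀ u v, h (u + v) ≤ h u + h v)
    (hsmul : ∀ (r : ℝ) v, h (r • v) = |r| * h v) (n : ℕ) (m : ℕ → ℝ)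
    (hm : ∀ i j, i < j → j ≤ n → m i < m j) :
    ∃ g : ℕ → ℝ × ℝ, (∀ i j, i < j → j < n + 2 → 0 ≤ cross (g i) (g j)) ∧
      (∀ v, h v ≤ zonoNorm (n + 2) g v) ∧
      (∀ i ≤ n, zonoNorm (n + 2) g (1, m i) = h (1, m i)) ∧
      zonoNorm (n + 2) g (0, 1) = h (0, 1) := by
  classical
  set H := h (0, 1) with hH
  let φ : ℝ → ℝ := fun x => h (1, x)
  have h00 : h 0 = 0 := by simpa using hsmul 0 0
  have hpos : ∀ v, 0 ≤ h v := fun v => by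
    have h1 := hadd v ((-1 : ℝ) • v)
    rw [hsmul] at h1
    have h2 : v + (-1 : ℝ) • v = 0 := by simp
    rw [h2, h00] at h1
    simp at h1; linarith
  have hvert : ∀ y, h (0, y) = |y| * H := fun y => by
    rw [hH, ← hsmul]; simp
  have hlip : ∀ x y, φ x ≤ φ y + |x - y| * H := fun x y => by
    have := hadd (1, y) (0, x - y)
    rw [hvert] at this
    simpa [φ] using this
  have hconv : ∀ x y z, x ≤ y → y ≤ z → φ y * (z - x) ≤ φ x * (z - y) + φ z * (y - x) :=
    fun x y z hxy hyz => by
      have := hadd ((z - y) • (1, x)) ((y - x) • (1, z))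
      have e : (z - y) • ((1 : ℝ), x) + (y - x) • ((1 : ℝ), z) = (z - x) • ((1 : ℝ), y) := by
        ext <;> simp <;> ring
      rw [e, hsmul, hsmul, hsmul, abs_of_nonneg (by linarith), abs_of_nonneg (by linarith),
        abs_of_nonneg (by linarith)] at this
      simp only [φ]; linarith
  have hH0 : 0 ≤ H := hpos _
  -- `s i` is the slope between the nodes `i - 1` and `i`.
  let s : ℕ → ℝ := fun i => if i = 0 then -H else if i = n + 1 then H else
    (φ (m i) - φ (m (i - 1))) / (m i - m (i - 1))
  have hs0 : s 0 = -H := by simp [s]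
  have hsn : s (n + 1) = H := by simp [s]
  have hsi : ∀ i < n, s (i + 1) * (m (i + 1) - m i) = φ (m (i + 1)) - φ (m i) := fun i hi => by
    have h1 : i ≠ n := by omega
    have := hm i (i + 1) (by omega) (by omega)
    simp only [s, Nat.add_eq_zero_iff, one_ne_zero, and_false, if_false, Nat.add_right_cancel_iff,
      h1, Nat.add_sub_cancel]
    rw [div_mul_cancel₀]; linarith
  have hsb : ∀ i ≤ n + 1, -H ≤ s i ∧ s i ≤ H := fun i hi => by
    rcases Nat.eq_zero_or_pos i with rfl | hi0
    · rw [hs0]; constructor <;> linarith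
    · obtain ⟨k, rfl⟩ : ∃ k, i = k + 1 := ⟨i - 1, by omega⟩
      rcases Nat.lt_or_ge k n with hk | hk
      · have h1 := hm k (k + 1) (by omega) (by omega)
        have h2 := hsi k hk
        have h3 := hlip (m (k + 1)) (m k)
        have h4 := hlip (m k) (m (k + 1))
        rw [abs_of_pos (by linarith)] at h3
        rw [abs_of_neg (by linarith)] at h4
        constructor
        · by_contra hc; push Not at hc; nlinarith
        · by_contra hc; push Not at hc; nlinarith
      · have : k = n := by omega
        subst this; rw [hsn]; constructor <;> linarith
  let a : ℕ → ℝ := fun i => (s (i + 1) - s i) / 2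
  have ha0 : ∀ i ≤ n, 0 ≤ a i := fun i hi => by
    suffices s i ≤ s (i + 1) by simp only [a]; linarith
    rcases Nat.eq_zero_or_pos i with rfl | hi0
    · rw [hs0]; exact (hsb 1 (by omega)).1
    · obtain ⟨k, rfl⟩ : ∃ k, i = k + 1 := ⟨i - 1, by omega⟩
      rcases Nat.lt_or_ge (k + 1) n with hk | hk
      · have h1 := hsi k (by omega)
        have h2 := hsi (k + 1) hk
        have h3 := hm k (k + 1) (by omega) (by omega)
        have h4 := hm (k + 1) (k + 1 + 1) (by omega) (by omega)
        have h5 := hconv _ _ _ h3.le h4.le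
        by_contra hc; push Not at hc
        have h6 : 0 < (m (k + 1) - m k) * (m (k + 1 + 1) - m (k + 1)) :=
          mul_pos (by linarith) (by linarith)
        nlinarith
      · have : k + 1 = n := by omega
        rw [this, hsn]; exact (hsb n (by omega)).2
  have hP : ∀ k, ∑ i ∈ Finset.range k, a i = (s k - s 0) / 2 := fun k => by
    rw [← Finset.sum_range_sub s k, Finset.sum_div]
  have hPn : ∑ i ∈ Finset.range (n + 1), a i = H := by rw [hP, hs0, hsn]; ring
  let α : ℝ := φ (m 0) - ∑ i ∈ Finset.range (n + 1), a i * |m 0 - m i|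
  let S : ℝ → ℝ := fun x => α + ∑ i ∈ Finset.range (n + 1), a i * |x - m i|
  have hle : ∀ i j, i ≤ j → j ≤ n → m i ≤ m j := fun i j hij hj => by
    rcases hij.eq_or_lt with rfl | hij
    · rfl
    · exact (hm _ _ hij hj).le
  have hS : ∀ j ≤ n, S (m j) = φ (m j) := by
    intro j
    induction j with
    | zero => intro _; simp [S, α]
    | succ j ih =>
      intro hj
      have ih := ih (by omega)
      have h1 : S (m (j + 1)) - S (m j)
          = (m (j + 1) - m j) * ∑ i ∈ Finset.range (n + 1),
            (2 * (if i < j + 1 then a i else 0) - a i) := by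
        simp only [S]
        rw [add_sub_add_left_eq_sub, ← Finset.sum_sub_distrib, Finset.mul_sum]
        refine Finset.sum_congr rfl fun i hi => ?_
        rw [Finset.mem_range] at hi
        have hjj := hle j (j + 1) (by omega) hj
        split_ifs with hij
        · have := hle i j (by omega) (by omega)
          rw [abs_of_nonneg (by linarith), abs_of_nonneg (by linarith)]; ring
        · have := hle (j + 1) i (by omega) (by omega)
          rw [abs_of_nonpos (by linarith), abs_of_nonpos (by linarith)]; ring
      have h2 : ∑ i ∈ Finset.range (n + 1), (if i < j + 1 then a i else 0)
          = ∑ i ∈ Finset.range (j + 1), a i := by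
        rw [← Finset.sum_filter]
        congr 1; ext i; simp; omega
      rw [Finset.sum_sub_distrib, ← Finset.mul_sum, h2, hPn, hP, hs0] at h1
      have := hsi j (by omega)
      linarith
  have hα : 0 ≤ α := by
    have h1 : S (m 0) + S (m n) = 2 * α + (m n - m 0) * H := by
      have : ∑ i ∈ Finset.range (n + 1), a i * |m 0 - m i|
          + ∑ i ∈ Finset.range (n + 1), a i * |m n - m i| = (m n - m 0) * H := by
        rw [← hPn, ← Finset.sum_add_distrib, Finset.mul_sum]
        refine Finset.sum_congr rfl fun i hi => ?_
        rw [Finset.mem_range] at hi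
        have := hle i n (by omega) le_rfl
        have := hle 0 i (by omega) (by omega)
        rw [abs_of_nonpos (by linarith), abs_of_nonneg (by linarith)]; ring
      simp only [S]; linarith
    rw [hS 0 (by omega), hS n le_rfl] at h1
    have h2 := hadd (1, m n) ((-1 : ℝ) • (1, m 0))
    have h3 : ((1 : ℝ), m n) + (-1 : ℝ) • ((1 : ℝ), m 0) = (0, m n - m 0) := by
      ext <;> simp; ring
    rw [h3, hsmul, hvert, abs_of_nonneg (by linarith [hle 0 n (by omega) le_rfl])] at h2
    simp only [abs_neg, abs_one, one_mul] at h2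
    simp only [φ] at h1
    linarith
  have hSφ : ∀ z, φ z ≤ S z := by
    intro z
    have hcases : ∀ k ≤ n, z ≤ m k → z ≤ m 0 ∨ ∃ j < k, m j ≤ z ∧ z ≤ m (j + 1) := by
      intro k
      induction k with
      | zero => intro _ hz; exact Or.inl hz
      | succ k ih =>
        intro hk hz
        rcases le_total z (m k) with h1 | h1
        · rcases ih (by omega) h1 with h2 | ⟨j, hj, h2⟩
          · exact Or.inl h2
          · exact Or.inr ⟨j, by omega, h2⟩
        · exact Or.inr ⟨k, by omega, h1, hz⟩
    rcases le_total (m n) z with hz | hz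
    · have h1 : S z = S (m n) + (z - m n) * H := by
        simp only [S]
        rw [← hPn, Finset.mul_sum, add_assoc, ← Finset.sum_add_distrib]
        congr 1
        refine Finset.sum_congr rfl fun i hi => ?_
        rw [Finset.mem_range] at hi
        have := hle i n (by omega) le_rfl
        rw [abs_of_nonneg (by linarith), abs_of_nonneg (by linarith)]; ring
      have h2 := hlip z (m n)
      rw [abs_of_nonneg (by linarith)] at h2
      rw [h1, hS n le_rfl]; exact h2
    · rcases hcases n le_rfl hz with hz | ⟨j, hj, hz1, hz2⟩
      · have h1 : S z = S (m 0) + (m 0 - z) * H := by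
          simp only [S]
          rw [← hPn, Finset.mul_sum, add_assoc, ← Finset.sum_add_distrib]
          congr 1
          refine Finset.sum_congr rfl fun i hi => ?_
          rw [Finset.mem_range] at hi
          have := hle 0 i (by omega) (by omega)
          rw [abs_of_nonpos (by linarith), abs_of_nonpos (by linarith)]; ring
        have h2 := hlip z (m 0)
        rw [abs_of_nonpos (by linarith)] at h2
        rw [h1, hS 0 (by omega)]; linarith
      · have h1 : S z * (m (j + 1) - m j)
            = S (m j) * (m (j + 1) - z) + S (m (j + 1)) * (z - m j) := by
          have : (∑ i ∈ Finset.range (n + 1), a i * |z - m i|) * (m (j + 1) - m j)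
              = (∑ i ∈ Finset.range (n + 1), a i * |m j - m i|) * (m (j + 1) - z)
                + (∑ i ∈ Finset.range (n + 1), a i * |m (j + 1) - m i|) * (z - m j) := by
            simp_rw [Finset.sum_mul, ← Finset.sum_add_distrib]
            refine Finset.sum_congr rfl fun i hi => ?_
            rw [Finset.mem_range] at hi
            rcases Nat.lt_or_ge i (j + 1) with hij | hij
            · have := hle i j (by omega) (by omega)
              rw [abs_of_nonneg (by linarith), abs_of_nonneg (by linarith),
                abs_of_nonneg (by linarith)]; ring
            · have := hle (j + 1) i (by omega) (by omega)
              rw [abs_of_nonpos (by linarith), abs_of_nonpos (by linarith),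
                abs_of_nonpos (by linarith)]; ring
          simp only [S]; linarith
        rw [hS j (by omega), hS (j + 1) (by omega)] at h1
        have h2 := hconv _ _ _ hz1 hz2
        have h3 := hm j (j + 1) (by omega) (by omega)
        rw [← h1] at h2
        exact le_of_mul_le_mul_right h2 (by linarith)
  let g : ℕ → ℝ × ℝ := fun i => if i < n + 1 then (a i, a i * m i) else (0, α)
  have hg : ∀ x y, zonoNorm (n + 2) g (x, y)
      = α * |x| + ∑ i ∈ Finset.range (n + 1), a i * |y - m i * x| := fun x y => by
    rw [zonoNorm, Finset.sum_range_succ, add_comm]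
    congr 1
    · simp [g, cross, abs_mul, abs_of_nonneg hα]
    · refine Finset.sum_congr rfl fun i hi => ?_
      rw [Finset.mem_range] at hi
      have h1 := ha0 i (by omega)
      simp only [g, hi, if_true, cross]
      rw [mul_assoc, ← mul_sub, abs_mul, abs_of_nonneg h1]
  have hg1 : ∀ x, zonoNorm (n + 2) g (1, x) = S x := fun x => by
    rw [hg]; simp [S]
  have hg0 : zonoNorm (n + 2) g (0, 1) = H := by
    rw [hg]; simp [hPn]
  refine ⟨g, ?_, ?_, ?_, hg0⟩
  · intro i j hij hj
    have h1 : i < n + 1 := by omega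
    have h2 := ha0 i (by omega)
    by_cases h3 : j < n + 1
    · have h4 := ha0 j (by omega)
      have h5 := hm i j hij (by omega)
      have : cross (g i) (g j) = a i * a j * (m j - m i) := by
        simp only [g, h1, h3, if_true, cross]; ring
      rw [this]
      exact mul_nonneg (mul_nonneg h2 h4) (by linarith)
    · have : cross (g i) (g j) = a i * α := by simp only [g, h1, h3, if_true, if_false, cross]; ring
      rw [this]; exact mul_nonneg h2 hα
  · rintro ⟨x, y⟩
    by_cases hx : x = 0
    · subst hx
      have : ((0 : ℝ), y) = y • ((0 : ℝ), (1 : ℝ)) := by simp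
      rw [this, hsmul, zonoNorm_smul, hg0]
    · have : (x, y) = x • ((1 : ℝ), y / x) := by
        ext <;> simp; field_simp
      rw [this, hsmul, zonoNorm_smul, hg1]
      exact mul_le_mul_of_nonneg_left (hSφ _) (abs_nonneg _)
  · intro i hi
    rw [hg1, hS i hi]

/-- The gauge of a centrally symmetric polygon is a zonogon seminorm, whose generators can be listed
in counterclockwise order within a half plane. -/
lemma gauge_eq_zonoNorm (L : Set (ℝ × ℝ)) (F : Finset (ℝ × ℝ))
    (hL : L = convexHull ℝ (F : Set (ℝ × ℝ))) (hsym : L = -L)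
    (h0 : (0 : ℝ × ℝ) ∈ interior L) :
    ∃ (k : ℕ) (g : ℕ → ℝ × ℝ), (∀ i j, i < j → j < k → 0 ≤ cross (g i) (g j)) ∧
      ∀ v, gauge L v = zonoNorm k g v := by
  classical
  have hcv : Convex ℝ L := by rw [hL]; exact convex_convexHull ℝ _
  have hnhds : L ∈ nhds (0 : ℝ × ℝ) := mem_interior_iff_mem_nhds.1 h0
  have habs : Absorbent ℝ L := absorbent_nhds_zero hnhds
  have hneg : ∀ x ∈ L, -x ∈ L := fun x hx => by rw [hsym]; simpa using hx
  have hadd := gauge_add_le hcv habs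
  have hsmul : ∀ (r : ℝ) v, gauge L (r • v) = |r| * gauge L v := fun r v => by
    rcases le_total 0 r with hr | hr
    · rw [gauge_smul_of_nonneg hr, abs_of_nonneg hr, smul_eq_mul]
    · rw [← neg_neg r, neg_smul, gauge_neg hneg, gauge_smul_of_nonneg (by linarith), abs_neg,
        abs_of_nonneg (by linarith), smul_eq_mul]
  let M : Finset ℝ := (F.filter fun u => u.1 ≠ 0).image fun u => u.2 / u.1
  have hM : M.Nonempty := by
    by_contra hne
    have hF : ∀ u ∈ F, u.1 = 0 := fun u hu => by
      by_contra hu1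
      exact hne ⟨u.2 / u.1, Finset.mem_image.2 ⟨u, Finset.mem_filter.2 ⟨hu, hu1⟩, rfl⟩⟩
    have hsub : L ⊆ {u : ℝ × ℝ | u.1 = 0} := by
      rw [hL]
      refine convexHull_min (fun u hu => hF u hu) ?_
      exact (convex_singleton (0 : ℝ)).linear_preimage (LinearMap.fst ℝ ℝ ℝ)
    obtain ⟨r, hr, hball⟩ := Metric.mem_nhds_iff.1 hnhds
    have : ((r / 2, 0) : ℝ × ℝ) ∈ L := hball (by
      simp [Prod.norm_def, abs_of_pos hr]; linarith)
    have := hsub this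
    simp at this; linarith
  obtain ⟨n, hn⟩ : ∃ n, M.card = n + 1 := ⟨M.card - 1, by have := hM.card_pos; omega⟩
  let m : ℕ → ℝ := fun i => if hi : i < n + 1 then M.orderEmbOfFin hn ⟨i, hi⟩ else 0
  have hm : ∀ i j, i < j → j ≤ n → m i < m j := fun i j hij hj => by
    have h1 : i < n + 1 := by omega
    have h2 : j < n + 1 := by omega
    simp only [m, h1, h2, dif_pos]
    exact (M.orderEmbOfFin hn).strictMono hij
  obtain ⟨g, hg1, hg2, hg3, hg4⟩ := exists_zonoNorm_interpolation (gauge L) hadd hsmul n m hm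
  refine ⟨n + 2, g, hg1, fun v => le_antisymm (hg2 v) ?_⟩
  have hLS : L ⊆ {v | zonoNorm (n + 2) g v ≤ 1} := by
    rw [hL]
    refine convexHull_min ?_ ?_
    · intro u hu
      have hu1 : gauge L u ≤ 1 := gauge_le_one_of_mem (by rw [hL]; exact subset_convexHull ℝ _ hu)
      suffices zonoNorm (n + 2) g u = gauge L u by
        change zonoNorm (n + 2) g u ≤ 1
        rw [this]; exact hu1
      by_cases hx : u.1 = 0
      · have : u = u.2 • ((0 : ℝ), (1 : ℝ)) := by ext <;> simp [hx]
        rw [this, hsmul, zonoNorm_smul, hg4]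
      · have : u = u.1 • ((1 : ℝ), u.2 / u.1) := by
          ext <;> simp; field_simp
        have hmem : u.2 / u.1 ∈ M :=
          Finset.mem_image.2 ⟨u, Finset.mem_filter.2 ⟨hu, hx⟩, rfl⟩
        have hr : u.2 / u.1 ∈ Set.range (M.orderEmbOfFin hn) := by
          rw [Finset.range_orderEmbOfFin]; exact hmem
        obtain ⟨i, hi⟩ := hr
        have hmi : m i = u.2 / u.1 := by simp only [m, i.2, dif_pos]; exact hi
        have h5 := hg3 i (by have := i.2; omega)
        rw [hmi] at h5
        rw [this, hsmul, zonoNorm_smul, h5]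
    · intro x hx y hy s t hs ht hst
      change zonoNorm _ _ _ ≤ 1
      refine (zonoNorm_add_le _ _ _ _).trans ?_
      rw [zonoNorm_smul, zonoNorm_smul, abs_of_nonneg hs, abs_of_nonneg ht]
      change zonoNorm _ _ _ ≤ 1 at hx
      change zonoNorm _ _ _ ≤ 1 at hy
      nlinarith
  refine le_of_forall_pos_le_add fun ε hε => ?_
  obtain ⟨b, hb0, hb, w, hw, rfl⟩ :=
    exists_lt_of_gauge_lt habs (show gauge L v < gauge L v + ε by linarith)
  have hw1 : zonoNorm (n + 2) g w ≤ 1 := hLS hw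
  have : zonoNorm (n + 2) g (b • w) ≤ b := by
    rw [zonoNorm_smul, abs_of_pos hb0]; nlinarith
  simp only at hb ⊢
  linarith

/-! ### Area of a zonogon and the polar dual -/

/-- Thickening a compact convex set by a vertical segment of length `2` adds twice the length of its
horizontal projection to its area, because each nonempty vertical slice grows by `2`. -/
lemma volume_add_vertical (K : Set (ℝ × ℝ)) (hK : IsCompact K) (hc : Convex ℝ K) (W : ℝ)
    (hproj : Prod.fst '' K = Set.Icc (-W) W) :
    volume ((fun p : (ℝ × ℝ) × ℝ => p.1 + (0, p.2)) '' (K ×ˢ Set.Icc (-1) 1))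
      = volume K + ENNReal.ofReal (4 * W) := by
  set K' := (fun p : (ℝ × ℝ) × ℝ => p.1 + (0, p.2)) '' (K ×ˢ Set.Icc (-1) 1) with hK'
  have hcK' : IsCompact K' := (hK.prod isCompact_Icc).image (by fun_prop)
  rw [Measure.volume_eq_prod, Measure.prod_apply hcK'.measurableSet,
    Measure.prod_apply hK.measurableSet]
  have hslice : ∀ x, volume (Prod.mk x ⁻¹' K')
      = volume (Prod.mk x ⁻¹' K) + (Set.Icc (-W) W).indicator (fun _ => 2) x := fun x => by
    by_cases hx : x ∈ Set.Icc (-W) W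
    · rw [Set.indicator_of_mem hx]
      have hx' := hx
      rw [← hproj] at hx'
      obtain ⟨⟨x', y⟩, hy, hxy⟩ := hx'
      simp only at hxy; subst hxy
      have hcomp : IsCompact (Prod.mk x' ⁻¹' K) := by
        have : Prod.mk x' ⁻¹' K = Prod.snd '' (K ∩ Prod.fst ⁻¹' {x'}) := by
          ext z; constructor
          · intro hz; exact ⟨(x', z), ⟨hz, rfl⟩, rfl⟩
          · rintro ⟨⟨a, b⟩, ⟨h1, h2⟩, rfl⟩
            simp only [Set.mem_preimage, Set.mem_singleton_iff] at h2
            subst h2; exact h1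
        rw [this]
        exact (hK.inter_right (isClosed_singleton.preimage continuous_fst)).image continuous_snd
      have hconv : Convex ℝ (Prod.mk x' ⁻¹' K) := by
        intro a ha b hb s t hs ht hst
        have := hc ha hb hs ht hst
        have e : s • (x', a) + t • (x', b) = (x', s • a + t • b) := by
          ext
          · simp [← add_mul, hst]
          · simp
        rw [e] at this; exact this
      have hIcc := eq_Icc_of_connected_compact ⟨⟨y, hy⟩, hconv.isPreconnected⟩ hcomp
      set lo := sInf (Prod.mk x' ⁻¹' K)
      set hi := sSup (Prod.mk x' ⁻¹' K)
      have hlh : lo ≤ hi := by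
        have : y ∈ Set.Icc lo hi := by rw [← hIcc]; exact hy
        exact this.1.trans this.2
      have hIcc' : Prod.mk x' ⁻¹' K' = Set.Icc (lo - 1) (hi + 1) := by
        ext z
        constructor
        · rintro ⟨⟨⟨a, b⟩, t⟩, ⟨h1, h2⟩, h3⟩
          simp only [Prod.mk_add_mk, add_zero, Prod.mk.injEq] at h3
          obtain ⟨rfl, rfl⟩ := h3
          have h4 : b ∈ Prod.mk a ⁻¹' K := h1
          rw [hIcc] at h4
          exact ⟨by linarith [h4.1, h2.1], by linarith [h4.2, h2.2]⟩
        · rintro ⟨h1, h2⟩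
          have h3 : max lo (min hi z) ∈ Prod.mk x' ⁻¹' K := by
            rw [hIcc]; exact ⟨le_max_left _ _, max_le hlh (min_le_left _ _)⟩
          refine ⟨((x', max lo (min hi z)), z - max lo (min hi z)), ⟨h3, ?_⟩, by simp⟩
          rcases le_total hi z with h | h
          · rw [min_eq_left h, max_eq_right hlh]; constructor <;> simp <;> linarith
          · rw [min_eq_right h]
            rcases le_total lo z with h' | h'
            · rw [max_eq_right h']; simp
            · rw [max_eq_left h']; constructor <;> simp <;> linarith
      rw [hIcc', hIcc, Real.volume_Icc, Real.volume_Icc,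
        show hi + 1 - (lo - 1) = (hi - lo) + 2 by ring,
        ENNReal.ofReal_add (by linarith) (by norm_num)]
      simp
    · rw [Set.indicator_of_notMem hx]
      have h1 : Prod.mk x ⁻¹' K = ∅ := by
        ext z; simp only [Set.mem_preimage, Set.mem_empty_iff_false, iff_false]
        intro hz; exact hx (hproj ▸ ⟨_, hz, rfl⟩)
      have h2 : Prod.mk x ⁻¹' K' = ∅ := by
        ext z; simp only [Set.mem_preimage, Set.mem_empty_iff_false, iff_false]
        rintro ⟨⟨⟨a, b⟩, t⟩, ⟨h3, h4⟩, h5⟩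
        simp only [Prod.mk_add_mk, add_zero, Prod.mk.injEq] at h5
        obtain ⟨rfl, rfl⟩ := h5
        exact hx (hproj ▸ ⟨_, h3, rfl⟩)
      rw [h1, h2]; simp
  simp_rw [hslice]
  rw [lintegral_add_right _ (measurable_const.indicator measurableSet_Icc),
    lintegral_indicator measurableSet_Icc]
  congr 1
  rw [setLIntegral_const, Real.volume_Icc, show (4 * W) = 2 * (W - -W) by ring,
    ENNReal.ofReal_mul (by norm_num)]
  simp

/-- The zonogon `∑ᵢ [-J gᵢ, J gᵢ]`, where `J` is the rotation by a right angle, as an iterated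
Minkowski sum of segments. -/
def zonogon (g : ℕ → ℝ × ℝ) : ℕ → Set (ℝ × ℝ)
  | 0 => {0}
  | k + 1 => (fun p : (ℝ × ℝ) × ℝ => p.1 + p.2 • (-(g k).2, (g k).1)) ''
      (zonogon g k ×ˢ Set.Icc (-1) 1)

lemma isCompact_zonogon (g : ℕ → ℝ × ℝ) (k : ℕ) : IsCompact (zonogon g k) := by
  induction k with
  | zero => exact isCompact_singleton
  | succ k ih => exact (ih.prod isCompact_Icc).image (by fun_prop)

lemma convex_zonogon (g : ℕ → ℝ × ℝ) (k : ℕ) : Convex ℝ (zonogon g k) := by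
  induction k with
  | zero => exact convex_singleton _
  | succ k ih =>
    refine (ih.prod (convex_Icc (-1 : ℝ) 1)).is_linear_image (f := fun p : (ℝ × ℝ) × ℝ =>
      p.1 + p.2 • (-(g k).2, (g k).1)) ⟨fun p q => ?_, fun r p => ?_⟩
    · ext <;> simp <;> ring
    · ext <;> simp <;> ring

lemma zonogon_support_le (g : ℕ → ℝ × ℝ) (k : ℕ) (v : ℝ × ℝ) :
    ∀ x ∈ zonogon g k, x.1 * v.1 + x.2 * v.2 ≤ zonoNorm k g v := by
  induction k with
  | zero => rintro x rfl; simp [zonoNorm]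
  | succ k ih =>
    rintro _ ⟨⟨x, t⟩, ⟨hx, ht⟩, rfl⟩
    have h1 := ih x hx
    have h2 : t * cross (g k) v ≤ |cross (g k) v| := by
      refine (le_abs_self _).trans ?_
      rw [abs_mul]
      exact mul_le_of_le_one_left (abs_nonneg _) (abs_le.2 ht)
    rw [zonoNorm, Finset.sum_range_succ]
    simp only [zonoNorm, cross] at h1 h2 ⊢
    simp only [Prod.fst_add, Prod.snd_add, Prod.smul_fst, Prod.smul_snd, smul_eq_mul]
    linarith

lemma zonogon_support_attained (g : ℕ → ℝ × ℝ) (k : ℕ) (v : ℝ × ℝ) :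
    ∃ x ∈ zonogon g k, x.1 * v.1 + x.2 * v.2 = zonoNorm k g v := by
  induction k with
  | zero => exact ⟨0, rfl, by simp [zonoNorm]⟩
  | succ k ih =>
    obtain ⟨x, hx, hv⟩ := ih
    obtain ⟨t, ht, htv⟩ : ∃ t ∈ Set.Icc (-1 : ℝ) 1, t * cross (g k) v = |cross (g k) v| := by
      rcases le_total 0 (cross (g k) v) with h | h
      · exact ⟨1, by simp, by rw [abs_of_nonneg h, one_mul]⟩
      · exact ⟨-1, by simp, by rw [abs_of_nonpos h]; ring⟩
    refine ⟨_, ⟨⟨x, t⟩, ⟨hx, ht⟩, rfl⟩, ?_⟩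
    rw [zonoNorm, Finset.sum_range_succ]
    simp only [zonoNorm, cross] at hv htv ⊢
    rw [← hv, ← htv]
    simp only [Prod.fst_add, Prod.snd_add, Prod.smul_fst, Prod.smul_snd, smul_eq_mul]
    ring

lemma zonoArea_nonneg (k : ℕ) (g : ℕ → ℝ × ℝ) : 0 ≤ zonoArea k g :=
  mul_nonneg (by norm_num)
    (Finset.sum_nonneg fun _ _ => Finset.sum_nonneg fun _ _ => abs_nonneg _)

/-- The area of a zonogon, by adding one generator at a time: a new segment `[-Jg, Jg]` increases the
area by `4` times the support function of the previous sum in the direction `g`. -/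
lemma volume_zonogon (g : ℕ → ℝ × ℝ) (k : ℕ) :
    volume (zonogon g k) = ENNReal.ofReal (zonoArea k g) := by
  induction k with
  | zero => simp [zonogon, zonoArea]
  | succ k ih =>
    have harea : zonoArea (k + 1) g = zonoArea k g + 4 * zonoNorm k g (g k) := by
      simp only [zonoArea, zonoNorm, Finset.sum_range_succ _ k]; ring
    rw [harea, ENNReal.ofReal_add (zonoArea_nonneg _ _)
      (mul_nonneg (by norm_num) (zonoNorm_nonneg _ _ _)), ← ih]
    by_cases hg : g k = 0
    · have h1 : zonogon g (k + 1) = zonogon g k := by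
        ext z; constructor
        · rintro ⟨⟨x, t⟩, ⟨hx, ht⟩, rfl⟩
          have h2 : ((-(g k).2, (g k).1) : ℝ × ℝ) = 0 := by rw [hg]; ext <;> simp
          simpa only [h2, smul_zero, add_zero] using hx
        · intro hz; exact ⟨(z, 0), ⟨hz, by simp⟩, by simp⟩
      rw [h1, hg]; simp [zonoNorm, cross]
    · -- An area preserving linear map `A` takes the new segment to `{0} × [-1, 1]`.
      set p := (g k).1 with hp
      set q := (g k).2 with hq
      have hr : p ^ 2 + q ^ 2 ≠ 0 := by
        intro h
        apply hg
        have hp0 : p = 0 := by nlinarith [sq_nonneg p, sq_nonneg q]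
        have hq0 : q = 0 := by nlinarith [sq_nonneg p, sq_nonneg q]
        ext
        · exact hp0
        · exact hq0
      let A : ℝ × ℝ →ₗ[ℝ] ℝ × ℝ := Matrix.toLin (Module.Basis.finTwoProd ℝ)
        (Module.Basis.finTwoProd ℝ) !![p, q; -q / (p ^ 2 + q ^ 2), p / (p ^ 2 + q ^ 2)]
      have hA : ∀ x, A x = (p * x.1 + q * x.2,
          -q / (p ^ 2 + q ^ 2) * x.1 + p / (p ^ 2 + q ^ 2) * x.2) := fun x => by
        simp only [A, Matrix.toLin_finTwoProd_apply]
      have hdet : LinearMap.det A = 1 := by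
        simp only [A, LinearMap.det_toLin, Matrix.det_fin_two_of]
        field_simp
        ring
      have hvol : ∀ s, volume (A '' s) = volume s := fun s => by
        rw [Measure.addHaar_image_linearMap, hdet]; simp
      have hcA : Continuous A := A.continuous_of_finiteDimensional
      have himg : A '' zonogon g (k + 1) = (fun p : (ℝ × ℝ) × ℝ => p.1 + (0, p.2)) ''
          ((A '' zonogon g k) ×ˢ Set.Icc (-1) 1) := by
        have hAw : ∀ (x : ℝ × ℝ) (t : ℝ), A (x + t • (-q, p)) = A x + (0, t) := fun x t => by
          rw [hA, hA]
          ext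
          · simp; ring
          · simp; field_simp; ring
        ext z; constructor
        · rintro ⟨_, ⟨⟨x, t⟩, ⟨hx, ht⟩, rfl⟩, rfl⟩
          exact ⟨(A x, t), ⟨⟨x, hx, rfl⟩, ht⟩, (hAw x t).symm⟩
        · rintro ⟨⟨_, t⟩, ⟨⟨x, hx, rfl⟩, ht⟩, rfl⟩
          exact ⟨_, ⟨⟨x, t⟩, ⟨hx, ht⟩, rfl⟩, hAw x t⟩
      rw [← hvol, himg, volume_add_vertical _ ((isCompact_zonogon g k).image hcA)
        ((convex_zonogon g k).linear_image A) (zonoNorm k g (g k)), hvol]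
      have hfst : Prod.fst '' (A '' zonogon g k)
          = (fun x : ℝ × ℝ => x.1 * p + x.2 * q) '' zonogon g k := by
        rw [Set.image_image]
        refine Set.image_congr fun x _ => ?_
        rw [hA]; ring
      rw [hfst]
      apply Set.Subset.antisymm
      · rintro _ ⟨x, hx, rfl⟩
        refine ⟨?_, zonogon_support_le g k (g k) x hx⟩
        have := zonogon_support_le g k ((-1 : ℝ) • g k) x hx
        rw [zonoNorm_smul] at this
        simp at this
        simp only; linarith
      · obtain ⟨x, hx, hxv⟩ := zonogon_support_attained g k (g k)
        obtain ⟨y, hy, hyv⟩ := zonogon_support_attained g k ((-1 : ℝ) • g k)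
        rw [zonoNorm_smul] at hyv
        simp at hyv
        have hcv : Convex ℝ ((fun x : ℝ × ℝ => x.1 * p + x.2 * q) '' zonogon g k) :=
          (convex_zonogon g k).is_linear_image
            ⟨fun a b => by simp; ring, fun a b => by simp; ring⟩
        refine hcv.ordConnected.out ⟨y, hy, ?_⟩ ⟨x, hx, hxv⟩
        simp only; linarith

/-- The polar dual of `L` is the rotated zonogon whose support function is the gauge of `L`. -/
lemma polarDual_eq_zonogon (L : Set (ℝ × ℝ)) (h0 : (0 : ℝ × ℝ) ∈ interior L) (k : ℕ)
    (g : ℕ → ℝ × ℝ) (hg : ∀ v, gauge L v = zonoNorm k g v) : polarDual L = zonogon g k := by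
  have hnhds : L ∈ nhds (0 : ℝ × ℝ) := mem_interior_iff_mem_nhds.1 h0
  have habs : Absorbent ℝ L := absorbent_nhds_zero hnhds
  apply Set.Subset.antisymm
  · intro x hx
    by_contra hxZ
    obtain ⟨f, u, hf1, hf2⟩ := geometric_hahn_banach_closed_point (convex_zonogon g k)
      (isCompact_zonogon g k).isClosed hxZ
    let v : ℝ × ℝ := (f (1, 0), f (0, 1))
    have hfv : ∀ z : ℝ × ℝ, f z = z.1 * v.1 + z.2 * v.2 := fun z => by
      have : z = z.1 • ((1 : ℝ), (0 : ℝ)) + z.2 • ((0 : ℝ), (1 : ℝ)) := by ext <;> simp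
      conv_lhs => rw [this]
      rw [map_add, map_smul, map_smul]; simp [v]
    obtain ⟨z, hz, hzv⟩ := zonogon_support_attained g k v
    have h1 := hf1 z hz
    rw [hfv, hzv, ← hg] at h1
    have h2 := h1.trans hf2
    rw [hfv] at h2
    obtain ⟨b, hb0, hb, w, hw, hwv⟩ := exists_lt_of_gauge_lt habs h2
    have h3 := hx w hw
    simp only at hwv
    rw [← hwv] at hb
    simp only [Prod.smul_fst, Prod.smul_snd, smul_eq_mul] at hb
    nlinarith
  · intro x hx y hy
    refine (zonogon_support_le g k y x hx).trans ?_
    rw [← hg]; exact gauge_le_one_of_mem hy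

/-! ### The isoperimetric inequality -/

/-- The linear functional `v ↦ u × v`. -/
noncomputable def crossCLM (u : ℝ × ℝ) : ℝ × ℝ →L[ℝ] ℝ :=
  u.1 • ContinuousLinearMap.snd ℝ ℝ ℝ - u.2 • ContinuousLinearMap.fst ℝ ℝ ℝ

lemma crossCLM_apply (u v : ℝ × ℝ) : crossCLM u v = cross u v := by simp [crossCLM, cross]

lemma continuous_zonoNorm (k : ℕ) (g : ℕ → ℝ × ℝ) : Continuous (zonoNorm k g) := by
  unfold zonoNorm cross; fun_prop

lemma abs_cross_le (u v : ℝ × ℝ) : |cross u v| ≤ 2 * ‖u‖ * ‖v‖ := by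
  have h1 := norm_fst_le u
  have h2 := norm_snd_le u
  have h3 := norm_fst_le v
  have h4 := norm_snd_le v
  rw [cross]
  refine (abs_sub _ _).trans ?_
  rw [abs_mul, abs_mul]
  simp only [Real.norm_eq_abs] at h1 h2 h3 h4
  have h5 := mul_le_mul h1 h4 (abs_nonneg _) (norm_nonneg _)
  have h6 := mul_le_mul h2 h3 (abs_nonneg _) (norm_nonneg _)
  linarith

lemma cross_sub_left (u v w : ℝ × ℝ) : cross (u - v) w = cross u w - cross v w := by
  simp [cross]; ring

lemma cross_sum_left (n : ℕ) (f : ℕ → ℝ × ℝ) (w : ℝ × ℝ) :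
    cross (∑ i ∈ Finset.range n, f i) w = ∑ i ∈ Finset.range n, cross (f i) w := by
  induction n with
  | zero => simp [cross]
  | succ n ih =>
    rw [Finset.sum_range_succ, Finset.sum_range_succ, ← ih]
    simp [cross]; ring

lemma cross_sum_right (n : ℕ) (f : ℕ → ℝ × ℝ) (w : ℝ × ℝ) :
    cross w (∑ i ∈ Finset.range n, f i) = ∑ i ∈ Finset.range n, cross w (f i) := by
  simp_rw [← crossCLM_apply, map_sum]

lemma intervalIntegrable_zonoNorm (k : ℕ) (g : ℕ → ℝ × ℝ) {f : ℝ → ℝ × ℝ} {a b : ℝ}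
    (hf : IntervalIntegrable f volume a b) :
    IntervalIntegrable (fun t => zonoNorm k g (f t)) volume a b := by
  have h : ∀ j, IntervalIntegrable (fun t => |cross (g j) (f t)|) volume a b := fun j => by
    have : IntervalIntegrable (fun t => crossCLM (g j) (f t)) volume a b :=
      ⟨(crossCLM (g j)).integrable_comp hf.1, (crossCLM (g j)).integrable_comp hf.2⟩
    simpa only [crossCLM_apply] using this.abs
  have := IntervalIntegrable.sum (Finset.range k) fun j _ => h j
  rwa [Finset.sum_fn] at this

lemma zonoNorm_integral_le (k : ℕ) (g : ℕ → ℝ × ℝ) {f : ℝ → ℝ × ℝ} {a b : ℝ} (hab : a ≤ b)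
    (hf : IntervalIntegrable f volume a b) :
    zonoNorm k g (∫ t in a..b, f t) ≤ ∫ t in a..b, zonoNorm k g (f t) := by
  have h : ∀ j, IntervalIntegrable (fun t => cross (g j) (f t)) volume a b := fun j => by
    have : IntervalIntegrable (fun t => crossCLM (g j) (f t)) volume a b :=
      ⟨(crossCLM (g j)).integrable_comp hf.1, (crossCLM (g j)).integrable_comp hf.2⟩
    simpa only [crossCLM_apply] using this
  simp only [zonoNorm]
  rw [intervalIntegral.integral_finsetSum fun j _ => (h j).abs]
  refine Finset.sum_le_sum fun j _ => ?_
  rw [← crossCLM_apply, ← ContinuousLinearMap.intervalIntegral_comp_comm _ hf]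
  simp only [crossCLM_apply]
  exact intervalIntegral.abs_integral_le_integral_abs hab

/-- The isoperimetric inequality for an open polygonal path, whose area is that of the polygon closed
up by the chord from its end to its start `p 0`. -/
lemma polygon_half_bound (k : ℕ) (g : ℕ → ℝ × ℝ) (n : ℕ) (p : ℕ → ℝ × ℝ) :
    zonoArea k g * |∑ i ∈ Finset.range n, cross (p i - p 0) (p (i + 1) - p i)|
      ≤ (∑ i ∈ Finset.range n, zonoNorm k g (p (i + 1) - p i)) ^ 2 := by
  refine le_trans ?_ (zono_isoperimetric k g n fun i => p (i + 1) - p i)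
  refine mul_le_mul_of_nonneg_left ?_ (zonoArea_nonneg _ _)
  refine (Finset.abs_sum_le_sum_abs _ _).trans (Finset.sum_le_sum fun i _ => ?_)
  rw [← Finset.sum_range_sub p i, cross_sum_left]
  exact Finset.abs_sum_le_sum_abs _ _

/-- Cutting a closed polygon by a chord into two paths of equally many edges, each of which is
subject to the isoperimetric inequality for paths. -/
lemma polygon_bound (k : ℕ) (g : ℕ → ℝ × ℝ) (n : ℕ) (p : ℕ → ℝ × ℝ) (h0 : p 0 = 0)
    (hn : p (n + n) = 0) (δ : ℝ) (hδ : ∀ i < n + n, zonoNorm k g (p (i + 1) - p i) ≤ δ) :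
    zonoArea k g * |∑ i ∈ Finset.range (n + n), cross (p i) (p (i + 1) - p i)|
      ≤ 2 * (n * δ) ^ 2 := by
  have h1 := polygon_half_bound k g n p
  have h2 := polygon_half_bound k g n fun i => p (n + i)
  have b1 : ∑ i ∈ Finset.range n, zonoNorm k g (p (i + 1) - p i) ≤ n * δ := by
    refine (Finset.sum_le_card_nsmul _ _ δ fun i hi => hδ i ?_).trans_eq (by simp)
    have := Finset.mem_range.1 hi; omega
  have b2 : ∑ i ∈ Finset.range n, zonoNorm k g (p (n + (i + 1)) - p (n + i)) ≤ n * δ := by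
    refine (Finset.sum_le_card_nsmul _ _ δ fun i hi => hδ (n + i) ?_).trans_eq (by simp)
    have := Finset.mem_range.1 hi; omega
  have c1 := pow_le_pow_left₀ (Finset.sum_nonneg fun i _ => zonoNorm_nonneg k g _) b1 2
  have c2 := pow_le_pow_left₀ (Finset.sum_nonneg fun i _ => zonoNorm_nonneg k g _) b2 2
  have hsplit : ∑ i ∈ Finset.range (n + n), cross (p i) (p (i + 1) - p i)
      = ∑ i ∈ Finset.range n, cross (p i - p 0) (p (i + 1) - p i)
        + ∑ i ∈ Finset.range n, cross (p (n + i) - p (n + 0)) (p (n + (i + 1)) - p (n + i)) := by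
    rw [Finset.sum_range_add]
    congr 1
    · simp [h0]
    · simp_rw [cross_sub_left, Finset.sum_sub_distrib, ← cross_sum_right]
      rw [Finset.sum_range_sub (fun i => p (n + i)), hn]
      simp only [add_assoc, add_zero]
      have : cross (p n) (0 - p n) = 0 := by simp [cross]; ring
      rw [this, sub_zero]
  rw [hsplit]
  have h3 := mul_le_mul_of_nonneg_left (abs_add_le
    (∑ i ∈ Finset.range n, cross (p i - p 0) (p (i + 1) - p i))
    (∑ i ∈ Finset.range n, cross (p (n + i) - p (n + 0)) (p (n + (i + 1)) - p (n + i))))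
    (zonoArea_nonneg k g)
  linarith

lemma ACCurve.sub_eq_integral (γ : ACCurve) {a b : ℝ} (ha : a ∈ Set.Icc (0 : ℝ) 1)
    (hb : b ∈ Set.Icc (0 : ℝ) 1) : γ.toFun b - γ.toFun a = ∫ t in a..b, γ.deriv t := by
  have hz : (0 : ℝ) ∈ Set.Icc (0 : ℝ) 1 := by simp
  have hi : ∀ x ∈ Set.Icc (0 : ℝ) 1, IntervalIntegrable γ.deriv volume 0 x := fun x hx =>
    γ.integrable.mono_set (by
      rw [Set.uIcc_of_le hx.1, Set.uIcc_of_le zero_le_one]; exact Set.Icc_subset_Icc le_rfl hx.2)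
  rw [γ.integral_eq a ha, γ.integral_eq b hb, ← intervalIntegral.integral_interval_sub_left
    (hi b hb) (hi a ha)]
  abel

lemma ACCurve.continuousOn (γ : ACCurve) : ContinuousOn γ.toFun (Set.uIcc 0 1) := by
  have h := intervalIntegral.continuousOn_primitive_interval' γ.integrable
    (Set.left_mem_uIcc (a := (0 : ℝ)) (b := 1))
  refine (continuousOn_const (c := γ.toFun 0) |>.add h).congr fun t ht => ?_
  rw [Set.uIcc_of_le zero_le_one] at ht
  exact γ.integral_eq t ht

lemma ACCurve.integrable_fst (γ : ACCurve) :
    IntervalIntegrable (fun t => (γ.deriv t).1) volume 0 1 :=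
  ⟨γ.integrable.1.fst, γ.integrable.2.fst⟩

lemma ACCurve.integrable_snd (γ : ACCurve) :
    IntervalIntegrable (fun t => (γ.deriv t).2) volume 0 1 :=
  ⟨γ.integrable.1.snd, γ.integrable.2.snd⟩

lemma ACCurve.integrable_cross (γ : ACCurve) :
    IntervalIntegrable (fun t => cross (γ.toFun t) (γ.deriv t)) volume 0 1 := by
  have h1 := γ.integrable_snd.continuousOn_mul γ.continuousOn.fst
  have h2 := γ.integrable_fst.continuousOn_mul γ.continuousOn.snd
  exact h1.sub h2

/-- The area of a curve is approximated by that of an inscribed polygon, up to an error controlled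
by the largest length of an arc. -/
lemma ACCurve.area_sub_polygon_le (γ : ACCurve) (k : ℕ) (g : ℕ → ℝ × ℝ) (C : ℝ) (hC : 0 ≤ C)
    (hCv : ∀ v, ‖v‖ ≤ C * zonoNorm k g v) (N : ℕ) (t : ℕ → ℝ) (ht0 : t 0 = 0) (htN : t N = 1)
    (ht : ∀ i ≤ N, t i ∈ Set.Icc (0 : ℝ) 1) (hmono : ∀ i < N, t i ≤ t (i + 1)) (δ : ℝ)
    (hδ : ∀ i < N, ∫ s in (t i)..(t (i + 1)), zonoNorm k g (γ.deriv s) ≤ δ) :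
    |2 * γ.area - ∑ i ∈ Finset.range N,
        cross (γ.toFun (t i)) (γ.toFun (t (i + 1)) - γ.toFun (t i))|
      ≤ 2 * C ^ 2 * δ * ∫ s in (0 : ℝ)..1, zonoNorm k g (γ.deriv s) := by
  have hsub : ∀ i < N, Set.uIcc (t i) (t (i + 1)) ⊆ Set.uIcc 0 1 := fun i hi => by
    rw [Set.uIcc_of_le (hmono i hi), Set.uIcc_of_le zero_le_one]
    exact Set.Icc_subset_Icc (ht i hi.le).1 (ht (i + 1) hi).2
  have hint := intervalIntegrable_zonoNorm k g γ.integrable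
  have e1 : 2 * γ.area = ∑ i ∈ Finset.range N,
      ∫ s in (t i)..(t (i + 1)), cross (γ.toFun s) (γ.deriv s) := by
    rw [intervalIntegral.sum_integral_adjacent_intervals
      fun i hi => γ.integrable_cross.mono_set (hsub i hi), ht0, htN, ACCurve.area]
    simp only [cross]; ring
  have e2 : ∫ s in (0 : ℝ)..1, zonoNorm k g (γ.deriv s) = ∑ i ∈ Finset.range N,
      ∫ s in (t i)..(t (i + 1)), zonoNorm k g (γ.deriv s) := by
    rw [intervalIntegral.sum_integral_adjacent_intervals
      fun i hi => hint.mono_set (hsub i hi), ht0, htN]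
  rw [e1, e2, ← Finset.sum_sub_distrib, Finset.mul_sum]
  refine (Finset.abs_sum_le_sum_abs _ _).trans (Finset.sum_le_sum fun i hi => ?_)
  rw [Finset.mem_range] at hi
  have hti := ht i hi.le
  have hti' := ht (i + 1) hi
  have hm := hmono i hi
  have e3 : cross (γ.toFun (t i)) (γ.toFun (t (i + 1)) - γ.toFun (t i))
      = ∫ s in (t i)..(t (i + 1)), cross (γ.toFun (t i)) (γ.deriv s) := by
    rw [γ.sub_eq_integral hti hti', ← crossCLM_apply,
      ← ContinuousLinearMap.intervalIntegral_comp_comm _ (γ.integrable.mono_set (hsub i hi))]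
    simp only [crossCLM_apply]
  have hci : IntervalIntegrable (fun s => cross (γ.toFun (t i)) (γ.deriv s)) volume
      (t i) (t (i + 1)) :=
    ((γ.integrable_snd.const_mul _).sub (γ.integrable_fst.const_mul _)).mono_set (hsub i hi)
  rw [e3, ← intervalIntegral.integral_sub (γ.integrable_cross.mono_set (hsub i hi)) hci,
    ← intervalIntegral.integral_const_mul, ← Real.norm_eq_abs]
  refine intervalIntegral.norm_integral_le_of_norm_le hm (Filter.Eventually.of_forall
    fun s hs => ?_) ((hint.mono_set (hsub i hi)).const_mul _)
  have hs1 : s ∈ Set.Icc (0 : ℝ) 1 := ⟨hti.1.trans hs.1.le, hs.2.trans hti'.2⟩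
  have hsub' : Set.uIcc (t i) s ⊆ Set.uIcc 0 1 := by
    rw [Set.uIcc_of_le hs.1.le, Set.uIcc_of_le zero_le_one]
    exact Set.Icc_subset_Icc hti.1 hs1.2
  have hdist : ‖γ.toFun s - γ.toFun (t i)‖ ≤ C * δ := by
    refine (hCv _).trans (mul_le_mul_of_nonneg_left ?_ hC)
    rw [γ.sub_eq_integral hti hs1]
    refine (zonoNorm_integral_le k g hs.1.le (γ.integrable.mono_set hsub')).trans ?_
    refine le_trans ?_ (hδ i hi)
    exact intervalIntegral.integral_mono_interval le_rfl hs.1.le hs.2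
      (Filter.Eventually.of_forall fun _ => zonoNorm_nonneg _ _ _) (hint.mono_set (hsub i hi))
  rw [Real.norm_eq_abs, ← cross_sub_left]
  refine (abs_cross_le _ _).trans ?_
  have h1 := mul_le_mul hdist (hCv (γ.deriv s)) (norm_nonneg _) ((norm_nonneg _).trans hdist)
  calc 2 * ‖γ.toFun s - γ.toFun (t i)‖ * ‖γ.deriv s‖
      = 2 * (‖γ.toFun s - γ.toFun (t i)‖ * ‖γ.deriv s‖) := by ring
    _ ≤ 2 * (C * δ * (C * zonoNorm k g (γ.deriv s))) := by linarith
    _ = _ := by ring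

/-- The isoperimetric inequality for closed absolutely continuous curves. The vertices of the inscribed
polygons cut the curve into `2n` arcs of equal length, so that the chord between the two halves of
the polygon cuts the curve at half its length; the error terms vanish as `n → ∞`. -/
lemma ACCurve.isoperimetric (γ : ACCurve) (k : ℕ) (g : ℕ → ℝ × ℝ) (C : ℝ) (hC : 0 ≤ C)
    (hCv : ∀ v, ‖v‖ ≤ C * zonoNorm k g v) (h0 : γ.toFun 0 = 0) (h1 : γ.toFun 1 = 0) :
    4 * zonoArea k g * |γ.area| ≤ (∫ s in (0 : ℝ)..1, zonoNorm k g (γ.deriv s)) ^ 2 := by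
  set l := ∫ s in (0 : ℝ)..1, zonoNorm k g (γ.deriv s) with hl
  have hl0 : 0 ≤ l :=
    intervalIntegral.integral_nonneg zero_le_one fun _ _ => zonoNorm_nonneg _ _ _
  have hV := zonoArea_nonneg k g
  rcases hl0.eq_or_lt with hl0 | hlpos
  · have := γ.area_sub_polygon_le k g C hC hCv 1 (fun i => (i : ℝ)) (by simp) (by simp)
      (fun i hi => by
        have : (i : ℝ) ≤ 1 := by exact_mod_cast hi
        exact ⟨Nat.cast_nonneg _, this⟩) (fun i _ => by simp) l
      (fun i hi => by
        obtain rfl : i = 0 := by omega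
        simp [hl])
    rw [← hl, ← hl0] at this
    simp [h0, h1, cross] at this
    have h2 : |γ.area| = 0 := le_antisymm (by linarith) (abs_nonneg _)
    rw [h2, mul_zero]; positivity
  · have hint := intervalIntegrable_zonoNorm k g γ.integrable
    let Λ : ℝ → ℝ := fun t => ∫ s in (0 : ℝ)..t, zonoNorm k g (γ.deriv s)
    have hΛc : ContinuousOn Λ (Set.Icc 0 1) := by
      have := intervalIntegral.continuousOn_primitive_interval' hint
        (Set.left_mem_uIcc (a := (0 : ℝ)) (b := 1))
      rwa [Set.uIcc_of_le zero_le_one] at this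
    have hsub : ∀ a ∈ Set.Icc (0 : ℝ) 1, ∀ b ∈ Set.Icc (0 : ℝ) 1,
        IntervalIntegrable (fun s => zonoNorm k g (γ.deriv s)) volume a b :=
      fun a ha b hb => hint.mono_set (by
        rw [← Set.uIcc_of_le zero_le_one] at ha hb
        exact Set.uIcc_subset_uIcc ha hb)
    have hz : (0 : ℝ) ∈ Set.Icc (0 : ℝ) 1 := by simp
    have hΛsub : ∀ a ∈ Set.Icc (0 : ℝ) 1, ∀ b ∈ Set.Icc (0 : ℝ) 1,
        ∫ s in a..b, zonoNorm k g (γ.deriv s) = Λ b - Λ a := fun a ha b hb =>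
      (intervalIntegral.integral_interval_sub_left (hsub 0 hz b hb) (hsub 0 hz a ha)).symm
    have hΛ0 : Λ 0 = 0 := by simp [Λ]
    have key : ∀ n : ℕ, 0 < n →
        4 * zonoArea k g * |γ.area| ≤ l ^ 2 + (2 * zonoArea k g * C ^ 2 * l ^ 2) / n := by
      intro n hn
      have hnR : (0 : ℝ) < n := by exact_mod_cast hn
      -- Points dividing the curve into `2n` arcs of equal length.
      have hex : ∀ i : ℕ, ∃ t : ℝ, i ≤ n + n → (t ∈ Set.Icc (0 : ℝ) 1 ∧
          Λ t = i * (l / (2 * n)) ∧ (i = 0 → t = 0) ∧ (i = n + n → t = 1)) := by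
        intro i
        by_cases hi0 : i = 0
        · exact ⟨0, fun _ => ⟨hz, by simp [hΛ0, hi0], fun _ => rfl, fun h => by omega⟩⟩
        by_cases hiN : i = n + n
        · refine ⟨1, fun _ => ⟨by simp, ?_, fun h => by omega, fun _ => rfl⟩⟩
          change l = _
          rw [hiN]; push_cast; field_simp; norm_num
        by_cases hi : i ≤ n + n
        · have hiR : (i : ℝ) ≤ 2 * n := by
            have : (i : ℝ) ≤ ((n + n : ℕ) : ℝ) := by exact_mod_cast hi
            push_cast at this; linarith
          have hmem : (i : ℝ) * (l / (2 * n)) ∈ Set.Icc (Λ 0) (Λ 1) := by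
            rw [hΛ0]
            refine ⟨by positivity, ?_⟩
            change _ ≤ l
            rw [mul_div_assoc', div_le_iff₀ (by positivity)]
            nlinarith
          obtain ⟨t, ht, hΛt⟩ := intermediate_value_Icc zero_le_one hΛc hmem
          exact ⟨t, fun _ => ⟨ht, hΛt, fun h => absurd h hi0, fun h => absurd h hiN⟩⟩
        · exact ⟨0, fun h => absurd h hi⟩
      choose t ht using hex
      have harc : ∀ i < n + n,
          ∫ s in (t i)..(t (i + 1)), zonoNorm k g (γ.deriv s) = l / (2 * n) := fun i hi => by
        rw [hΛsub _ (ht i hi.le).1 _ (ht (i + 1) hi).1, (ht i hi.le).2.1, (ht (i + 1) hi).2.1]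
        push_cast; ring
      have hmono : ∀ i < n + n, t i ≤ t (i + 1) := fun i hi => by
        by_contra hc
        push Not at hc
        have h2 := harc i hi
        rw [intervalIntegral.integral_symm] at h2
        have h3 : 0 ≤ ∫ s in (t (i + 1))..(t i), zonoNorm k g (γ.deriv s) :=
          intervalIntegral.integral_nonneg hc.le fun _ _ => zonoNorm_nonneg _ _ _
        have h4 : 0 < l / (2 * n) := by positivity
        linarith
      have ht0 : t 0 = 0 := (ht 0 (by omega)).2.2.1 rfl
      have htN : t (n + n) = 1 := (ht (n + n) le_rfl).2.2.2 rfl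
      have hA := γ.area_sub_polygon_le k g C hC hCv (n + n) t ht0 htN
        (fun i hi => (ht i hi).1) hmono (l / (2 * n)) (fun i hi => (harc i hi).le)
      have hB := polygon_bound k g n (fun i => γ.toFun (t i)) (by simp only [ht0, h0])
        (by simp only [htN, h1]) (l / (2 * n)) (fun i hi => by
          rw [γ.sub_eq_integral (ht i hi.le).1 (ht (i + 1) hi).1, ← harc i hi]
          refine zonoNorm_integral_le k g (hmono i hi) (γ.integrable.mono_set ?_)
          have ha := (ht i hi.le).1
          have hb := (ht (i + 1) hi).1
          rw [← Set.uIcc_of_le zero_le_one] at ha hb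
          exact Set.uIcc_subset_uIcc ha hb)
      set P := ∑ i ∈ Finset.range (n + n),
        cross (γ.toFun (t i)) (γ.toFun (t (i + 1)) - γ.toFun (t i)) with hP
      have h5 : |2 * γ.area| ≤ |2 * γ.area - P| + |P| := by
        have := abs_add_le (2 * γ.area - P) P
        simpa using this
      rw [abs_mul, abs_two] at h5
      have h6 : 2 * (↑n * (l / (2 * ↑n))) ^ 2 = l ^ 2 / 2 := by field_simp
      have h7 : 2 * C ^ 2 * (l / (2 * ↑n)) * l = C ^ 2 * l ^ 2 / n := by field_simp
      rw [← hl, h7] at hA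
      rw [h6] at hB
      have h8 := mul_le_mul_of_nonneg_left (h5.trans (add_le_add_left hA _)) hV
      calc 4 * zonoArea k g * |γ.area| = 2 * (zonoArea k g * (2 * |γ.area|)) := by ring
        _ ≤ 2 * (zonoArea k g * (C ^ 2 * l ^ 2 / n + |P|)) := by linarith
        _ = 2 * (zonoArea k g * |P|) + (2 * zonoArea k g * C ^ 2 * l ^ 2) / n := by ring
        _ ≤ _ := by linarith
    have hlim : Filter.Tendsto (fun n : ℕ => l ^ 2 + (2 * zonoArea k g * C ^ 2 * l ^ 2) / n)
        Filter.atTop (nhds (l ^ 2 + 0)) :=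
      tendsto_const_nhds.add (tendsto_const_div_atTop_nhds_zero_nat _)
    rw [add_zero] at hlim
    exact ge_of_tendsto hlim (Filter.eventually_atTop.2 ⟨1, fun n hn => key n hn⟩)

/-! ### Optimal curves and the CC-norm -/

/-- A function that is constant on each open interval `(k/N, (k+1)/N)` is integrable up to
`m/N`, with the expected integral. -/
lemma step_integral {X : Type*} [NormedAddCommGroup X] [NormedSpace ℝ X] [CompleteSpace X]
    (N : ℕ) (f : ℝ → X) (u : ℕ → X)
    (h : ∀ k < N, ∀ t ∈ Set.Ioo ((k : ℝ) / N) (((k + 1 : ℕ) : ℝ) / N), f t = u k)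
    (hN : 0 < N) (m : ℕ) (hm : m ≤ N) :
    IntervalIntegrable f volume 0 ((m : ℝ) / N) ∧
      ∫ t in (0 : ℝ)..((m : ℝ) / N), f t = (N : ℝ)⁻¹ • ∑ k ∈ Finset.range m, u k := by
  have hN' : (0 : ℝ) < N := by exact_mod_cast hN
  have hle : ∀ k : ℕ, (k : ℝ) / N ≤ ((k + 1 : ℕ) : ℝ) / N := fun k => by
    gcongr; simp
  have hint : ∀ k < m, IntervalIntegrable f volume ((k : ℝ) / N) (((k + 1 : ℕ) : ℝ) / N) := by
    intro k hk
    refine (intervalIntegrable_const (c := u k)).congr_uIoo ?_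
    rw [Set.uIoo_of_le (hle k)]
    intro t ht
    exact (h k (by omega) t ht).symm
  have h1 := IntervalIntegrable.trans_iterate (a := fun k : ℕ => (k : ℝ) / N) hint
  have h2 := intervalIntegral.sum_integral_adjacent_intervals
    (a := fun k : ℕ => (k : ℝ) / N) hint
  simp only [Nat.cast_zero, zero_div] at h1 h2
  refine ⟨h1, ?_⟩
  rw [← h2, Finset.smul_sum]
  refine Finset.sum_congr rfl fun k hk => ?_
  rw [intervalIntegral.integral_congr_Ioo_of_le (hle k)
    (fun t ht => h k (by have := Finset.mem_range.1 hk; omega) t ht : Set.EqOn f (fun _ => u k) _),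
    intervalIntegral.integral_const]
  congr 1
  push_cast
  field_simp
  ring

/-- The closed polygon with edges `e 0, …, e (N-1)`, traversed with speed `N • e k` on the
`k`-th interval of length `1/N`, as an absolutely continuous curve. -/
lemma exists_polygon_curve (L : Set (ℝ × ℝ)) (N : ℕ) (hN : 0 < N) (e : ℕ → ℝ × ℝ)
    (hsum : ∑ k ∈ Finset.range N, e k = 0) :
    ∃ γ : ACCurve, γ.toFun 0 = 0 ∧ γ.toFun 1 = 0 ∧
      γ.area = (1 / 2) * ∑ k ∈ Finset.range N, cross (∑ i ∈ Finset.range k, e i) (e k) ∧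
      γ.length L = ∑ k ∈ Finset.range N, gauge L (e k) := by
  have hN' : (0 : ℝ) < N := by exact_mod_cast hN
  have hNN : (N : ℝ) / N = 1 := div_self hN'.ne'
  let d : ℝ → ℝ × ℝ := fun t => (N : ℝ) • e ⌊(N : ℝ) * t⌋₊
  have hd : ∀ k < N, ∀ t ∈ Set.Ioo ((k : ℝ) / N) (((k + 1 : ℕ) : ℝ) / N),
      d t = (N : ℝ) • e k := by
    intro k _ t ht
    have h1 : (k : ℝ) < N * t := by
      have := ht.1; rw [div_lt_iff₀ hN'] at this; linarith
    have h2 : (N : ℝ) * t < k + 1 := by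
      have := ht.2; rw [lt_div_iff₀ hN'] at this; push_cast at this; linarith
    have : ⌊(N : ℝ) * t⌋₊ = k := (Nat.floor_eq_iff ((Nat.cast_nonneg k).trans h1.le)).2 ⟨h1.le, h2⟩
    simp only [d, this]
  have hI := fun m hm => step_integral N d (fun k => (N : ℝ) • e k) hd hN m hm
  have hP : ∀ m ≤ N, ∫ s in (0 : ℝ)..((m : ℝ) / N), d s = ∑ k ∈ Finset.range m, e k := by
    intro m hm
    rw [(hI m hm).2, ← Finset.smul_sum, smul_smul, inv_mul_cancel₀ hN'.ne', one_smul]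
  have hI1 : IntervalIntegrable d volume 0 1 := by
    have := (hI N le_rfl).1; rwa [hNN] at this
  let γ : ACCurve :=
    { toFun := fun t => ∫ s in (0 : ℝ)..t, d s
      deriv := d
      integrable := hI1
      integral_eq := fun t _ => by simp }
  refine ⟨γ, by simp [γ], ?_, ?_, ?_⟩
  · have := hP N le_rfl
    rw [hNN, hsum] at this
    exact this
  · have hc : ∀ k < N, ∀ t ∈ Set.Ioo ((k : ℝ) / N) (((k + 1 : ℕ) : ℝ) / N),
        (γ.toFun t).1 * (γ.deriv t).2 - (γ.toFun t).2 * (γ.deriv t).1 =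
          N * cross (∑ i ∈ Finset.range k, e i) (e k) := by
      intro k hk t ht
      have hpos : γ.toFun t = ∑ i ∈ Finset.range k, e i + (t - k / N) • (N : ℝ) • e k := by
        have hc1 : ∫ s in ((k : ℝ) / N)..t, d s = (t - k / N) • (N : ℝ) • e k := by
          rw [intervalIntegral.integral_congr_Ioo_of_le ht.1.le
            (fun s hs => hd k hk s ⟨hs.1, hs.2.trans ht.2⟩ :
              Set.EqOn d (fun _ => (N : ℝ) • e k) _), intervalIntegral.integral_const]
        have hc2 : IntervalIntegrable d volume ((k : ℝ) / N) t := by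
          refine (intervalIntegrable_const (c := (N : ℝ) • e k)).congr_uIoo ?_
          rw [Set.uIoo_of_le ht.1.le]
          exact fun s hs => (hd k hk s ⟨hs.1, hs.2.trans ht.2⟩).symm
        rw [← hc1, ← hP k hk.le]
        exact (intervalIntegral.integral_add_adjacent_intervals (hI k hk.le).1 hc2).symm
      have hder : γ.deriv t = (N : ℝ) • e k := hd k hk t ht
      rw [hpos, hder]
      simp only [cross, Prod.fst_add, Prod.snd_add, Prod.smul_fst, Prod.smul_snd, smul_eq_mul]
      ring
    have := (step_integral N _ _ hc hN N le_rfl).2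
    rw [hNN, ← Finset.mul_sum, smul_eq_mul, inv_mul_cancel_left₀ hN'.ne'] at this
    rw [ACCurve.area, this]
  · have hc : ∀ k < N, ∀ t ∈ Set.Ioo ((k : ℝ) / N) (((k + 1 : ℕ) : ℝ) / N),
        gauge L (γ.deriv t) = N * gauge L (e k) := by
      intro k hk t ht
      have hder : γ.deriv t = (N : ℝ) • e k := hd k hk t ht
      rw [hder, gauge_smul_of_nonneg hN'.le, smul_eq_mul]
    have := (step_integral N _ _ hc hN N le_rfl).2
    rw [hNN, ← Finset.mul_sum, smul_eq_mul, inv_mul_cancel_left₀ hN'.ne'] at this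
    rw [ACCurve.length, this]

/-- The centrally symmetric polygon with edges `f 0, …, f (n-1), -f 0, …, -f (n-1)`: its area is
the sum of the `cross (f i) (f j)` over `i < j`. -/
lemma exists_symm_polygon_curve (L : Set (ℝ × ℝ)) (hev : ∀ v, gauge L (-v) = gauge L v)
    (n : ℕ) (hn : 0 < n) (f : ℕ → ℝ × ℝ) :
    ∃ γ : ACCurve, γ.toFun 0 = 0 ∧ γ.toFun 1 = 0 ∧
      γ.area = ∑ j ∈ Finset.range n, ∑ i ∈ Finset.range j, cross (f i) (f j) ∧
      γ.length L = 2 * ∑ k ∈ Finset.range n, gauge L (f k) := by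
  let e : ℕ → ℝ × ℝ := fun k => if k < n then f k else -f (k - n)
  have he1 : ∀ k < n, e k = f k := fun k hk => if_pos hk
  have he2 : ∀ k, e (n + k) = -f k := fun k => by simp [e]
  have hs1 : ∀ k ≤ n, ∑ i ∈ Finset.range k, e i = ∑ i ∈ Finset.range k, f i := fun k hk =>
    Finset.sum_congr rfl fun i hi => he1 i (by have := Finset.mem_range.1 hi; omega)
  have hs2 : ∀ k, ∑ i ∈ Finset.range (n + k), e i =
      ∑ i ∈ Finset.range n, f i - ∑ i ∈ Finset.range k, f i := fun k => by
    rw [Finset.sum_range_add, hs1 n le_rfl]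
    simp only [he2, Finset.sum_neg_distrib, sub_eq_add_neg]
  obtain ⟨γ, h0, h1, hA, hl⟩ := exists_polygon_curve L (n + n) (by omega) e
    (by rw [hs2, sub_self])
  refine ⟨γ, h0, h1, ?_, ?_⟩
  · rw [hA, Finset.sum_range_add]
    have h3 : ∑ k ∈ Finset.range n, cross (∑ i ∈ Finset.range k, e i) (e k) =
        ∑ j ∈ Finset.range n, ∑ i ∈ Finset.range j, cross (f i) (f j) := by
      refine Finset.sum_congr rfl fun k hk => ?_
      have hk := Finset.mem_range.1 hk
      rw [hs1 k hk.le, he1 k hk, cross_sum_left]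
    have h4 : ∑ k ∈ Finset.range n, cross (∑ i ∈ Finset.range (n + k), e i) (e (n + k)) =
        -cross (∑ i ∈ Finset.range n, f i) (∑ i ∈ Finset.range n, f i) +
        ∑ j ∈ Finset.range n, ∑ i ∈ Finset.range j, cross (f i) (f j) := by
      rw [cross_sum_right n f, ← Finset.sum_neg_distrib, ← Finset.sum_add_distrib]
      refine Finset.sum_congr rfl fun k _ => ?_
      rw [hs2, he2, ← cross_sum_left]
      simp only [cross, Prod.fst_sub, Prod.snd_sub, Prod.fst_neg, Prod.snd_neg]
      ring
    rw [h3, h4, cross_self_eq]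
    ring
  · rw [hl, Finset.sum_range_add, two_mul]
    congr 1
    · exact Finset.sum_congr rfl fun k hk => by rw [he1 k (Finset.mem_range.1 hk)]
    · exact Finset.sum_congr rfl fun k _ => by rw [he2, hev]

/-- Twice the sum of the norms of the generators is the area of the zonogon. -/
lemma sum_zonoNorm_self (k : ℕ) (g : ℕ → ℝ × ℝ) :
    2 * ∑ j ∈ Finset.range k, zonoNorm k g (g j) = zonoArea k g := by
  have := sum_range_sum_symm k (fun i j => |cross (g i) (g j)|)
    (fun i j => abs_cross_comm _ _) (fun i => by rw [cross_self_eq, abs_zero])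
  have h2 : ∑ j ∈ Finset.range k, zonoNorm k g (g j) =
      ∑ i ∈ Finset.range k, ∑ j ∈ Finset.range k, |cross (g i) (g j)| := by
    rw [Finset.sum_comm]; rfl
  rw [h2, this, zonoArea]
  ring

/-- The curve realizing the infimum: the boundary of a suitably scaled zonogon with edges parallel to
the generators, traversed counterclockwise if `c` is positive and clockwise if `c` is negative. -/
lemma exists_optimal_curve (L : Set (ℝ × ℝ)) (k : ℕ) (g : ℕ → ℝ × ℝ)
    (hord : ∀ i j, i < j → j < k → 0 ≤ cross (g i) (g j))
    (hg : ∀ v, gauge L v = zonoNorm k g v) (hV : 0 < zonoArea k g) (c : ℝ) :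
    ∃ γ : ACCurve, γ.toFun 0 = 0 ∧ γ.toFun 1 = 0 ∧ γ.area = c ∧
      γ.length L = 2 * Real.sqrt (|c| * zonoArea k g) := by
  set V := zonoArea k g with hVdef
  have hk : 0 < k := by
    rcases Nat.eq_zero_or_pos k with rfl | h
    · simp [hVdef, zonoArea] at hV
    · exact h
  have hev : ∀ v, gauge L (-v) = gauge L v := fun v => by
    rw [hg, hg, ← neg_one_smul ℝ v, zonoNorm_smul]; simp
  set q := Real.sqrt (|c| * V) with hq
  have hq0 : 0 ≤ q := Real.sqrt_nonneg _
  have hq2 : q ^ 2 = |c| * V := Real.sq_sqrt (by positivity)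
  -- scaling the generators by `r` turns `(V / 4, V)` into `(r ^ 2 * V / 4, r * V) = (|c|, 2 * q)`
  set r := 2 * q / V with hr
  have hr0 : 0 ≤ r := by positivity
  have hr2 : r ^ 2 * (V / 4) = |c| := by
    rw [hr, div_pow, mul_pow, hq2]; field_simp; ring
  have hrV : r * V = 2 * q := by rw [hr]; field_simp
  have hnorm : ∀ j, gauge L (r • g j) = r * zonoNorm k g (g j) := fun j => by
    rw [hg, zonoNorm_smul, abs_of_nonneg hr0]
  have hlen : 2 * ∑ j ∈ Finset.range k, gauge L (r • g j) = 2 * q := by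
    simp only [hnorm]
    rw [← Finset.mul_sum, ← hrV, hVdef, ← sum_zonoNorm_self]; ring
  have hcr : ∀ u v : ℝ × ℝ, cross (r • u) (r • v) = r ^ 2 * cross u v := fun u v => by
    simp only [cross, Prod.smul_fst, Prod.smul_snd, smul_eq_mul]; ring
  have harea : ∑ j ∈ Finset.range k, ∑ i ∈ Finset.range j, |cross (g i) (g j)| = V / 4 := by
    rw [hVdef, zonoArea]; ring
  rcases le_total 0 c with hc | hc
  · obtain ⟨γ, h0, h1, hA, hl⟩ := exists_symm_polygon_curve L hev k hk (fun j => r • g j)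
    refine ⟨γ, h0, h1, ?_, hl.trans hlen⟩
    rw [hA, ← abs_of_nonneg hc, ← hr2, ← harea, Finset.mul_sum]
    refine Finset.sum_congr rfl fun j hj => ?_
    rw [Finset.mul_sum]
    refine Finset.sum_congr rfl fun i hi => ?_
    rw [hcr, abs_of_nonneg (hord i j (Finset.mem_range.1 hi) (Finset.mem_range.1 hj))]
  · obtain ⟨γ, h0, h1, hA, hl⟩ := exists_symm_polygon_curve L hev k hk
      (fun j => r • g (k - 1 - j))
    refine ⟨γ, h0, h1, ?_, ?_⟩
    · have hcc : c = -|c| := by rw [abs_of_nonpos hc, neg_neg]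
      have h3 := sum_range_sum_symm k (fun i j => |cross (g (k - 1 - i)) (g (k - 1 - j))|)
        (fun i j => abs_cross_comm _ _) (fun i => by rw [cross_self_eq, abs_zero])
      have h4 := sum_range_sum_symm k (fun i j => |cross (g i) (g j)|)
        (fun i j => abs_cross_comm _ _) (fun i => by rw [cross_self_eq, abs_zero])
      have h5 : ∀ F : ℕ → ℕ → ℝ,
          ∑ i ∈ Finset.range k, ∑ j ∈ Finset.range k, F (k - 1 - i) (k - 1 - j) =
          ∑ i ∈ Finset.range k, ∑ j ∈ Finset.range k, F i j := fun F => by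
        rw [← Finset.sum_range_reflect (fun i => ∑ j ∈ Finset.range k, F i j)]
        refine Finset.sum_congr rfl fun i _ => ?_
        exact Finset.sum_range_reflect (fun j => F (k - 1 - i) j) k
      rw [h5 (fun i j => |cross (g i) (g j)|), h4, harea] at h3
      have h6 : V / 4 = ∑ j ∈ Finset.range k, ∑ i ∈ Finset.range j,
          |cross (g (k - 1 - i)) (g (k - 1 - j))| := by linarith
      rw [hA, hcc, ← hr2, h6, ← mul_neg, ← Finset.sum_neg_distrib, Finset.mul_sum]
      refine Finset.sum_congr rfl fun j hj => ?_
      rw [← Finset.sum_neg_distrib, Finset.mul_sum]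
      refine Finset.sum_congr rfl fun i hi => ?_
      have hi := Finset.mem_range.1 hi
      have hj := Finset.mem_range.1 hj
      have := hord (k - 1 - j) (k - 1 - i) (by omega) (by omega)
      rw [hcr, abs_cross_comm, abs_of_nonneg this]
      simp only [cross]; ring
    · rw [hl, Finset.sum_range_reflect (fun j => gauge L (r • g j))]
      exact hlen

/-- The gauge of a bounded neighbourhood of the origin dominates a multiple of the norm. -/
lemma exists_norm_le_gauge (L : Set (ℝ × ℝ)) (F : Finset (ℝ × ℝ))
    (hL : L = convexHull ℝ (F : Set (ℝ × ℝ))) (h0 : (0 : ℝ × ℝ) ∈ interior L) :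
    ∃ C : ℝ, 0 ≤ C ∧ ∀ v, ‖v‖ ≤ C * gauge L v := by
  have hb : Bornology.IsBounded L := by
    rw [hL]; exact (F.finite_toSet.isCompact_convexHull ℝ).isBounded
  obtain ⟨R, hR0, hR⟩ := hb.subset_closedBall_lt 0 0
  refine ⟨R, hR0.le, fun v => ?_⟩
  have := le_gauge_of_subset_closedBall (x := v)
    (absorbent_nhds_zero (mem_interior_iff_mem_nhds.1 h0)) hR0.le hR
  rw [div_le_iff₀ hR0] at this
  linarith

/-- Generators of a genuine norm cannot all be parallel. -/
lemma zonoArea_pos (k : ℕ) (g : ℕ → ℝ × ℝ) (C : ℝ)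
    (hC : ∀ v, ‖v‖ ≤ C * zonoNorm k g v) : 0 < zonoArea k g := by
  refine lt_of_le_of_ne (zonoArea_nonneg k g) fun h => ?_
  have hz : ∀ v, zonoNorm k g v = 0 → v = 0 := fun v hv => by
    have := hC v
    rw [hv, mul_zero] at this
    exact norm_le_zero_iff.1 this
  have h1 : ∑ j ∈ Finset.range k, zonoNorm k g (g j) = 0 := by
    have := sum_zonoNorm_self k g; linarith
  rw [Finset.sum_eq_zero_iff_of_nonneg fun _ _ => zonoNorm_nonneg _ _ _] at h1
  have h2 : zonoNorm k g (1, 0) = 0 :=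
    Finset.sum_eq_zero fun j hj => by rw [hz _ (h1 j hj)]; simp [cross]
  have := hz _ h2
  simp at this

/-- The CC-norm of a central element: `‖(0,0,c)‖_CC = 2·√(|c| · vol(L*))`. -/
theorem ccNorm_central_formula (L : Set (ℝ × ℝ)) (F : Finset (ℝ × ℝ))
    (hL : L = convexHull ℝ (F : Set (ℝ × ℝ))) (hsym : L = -L)
    (h0 : (0 : ℝ × ℝ) ∈ interior L)
    (c : ℝ) :
    ccNorm L (0, 0, c) = 2 * Real.sqrt (|c| * (volume (polarDual L)).toReal) := by
  obtain ⟨k, g, hord, hg⟩ := gauge_eq_zonoNorm L F hL hsym h0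
  obtain ⟨C, hC0, hC⟩ := exists_norm_le_gauge L F hL h0
  simp only [hg] at hC
  have hV := zonoArea_pos k g C hC
  have hvol : (volume (polarDual L)).toReal = zonoArea k g := by
    rw [polarDual_eq_zonogon L h0 k g hg, volume_zonogon, ENNReal.toReal_ofReal hV.le]
  rw [hvol]
  obtain ⟨γ, hγ0, hγ1, hγA, hγl⟩ := exists_optimal_curve L k g hord hg hV c
  have hlb : ∀ x ∈ { r | ∃ γ : ACCurve, γ.toFun 0 = 0 ∧ γ.toFun 1 = (0, 0) ∧
      γ.area = c ∧ γ.length L = r }, 2 * Real.sqrt (|c| * zonoArea k g) ≤ x := by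
    rintro x ⟨δ, hδ0, hδ1, hδA, rfl⟩
    have hlen : δ.length L = ∫ s in (0 : ℝ)..1, zonoNorm k g (δ.deriv s) := by
      simp only [ACCurve.length, hg]
    have h1 := δ.isoperimetric k g C hC0 hC hδ0 hδ1
    rw [hδA, ← hlen] at h1
    have h2 : 0 ≤ δ.length L := by
      rw [hlen]
      exact intervalIntegral.integral_nonneg zero_le_one fun _ _ => zonoNorm_nonneg _ _ _
    have h3 : Real.sqrt (|c| * zonoArea k g) ≤ δ.length L / 2 :=
      Real.sqrt_le_iff.2 ⟨by positivity, by nlinarith⟩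
    linarith
  exact le_antisymm (csInf_le ⟨_, hlb⟩ ⟨γ, hγ0, hγ1, hγA, hγl⟩)
    (le_csInf ⟨_, γ, hγ0, hγ1, hγA, hγl⟩ hlb)
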